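/- arXiv:2209.09945 — 10 statements merged into one kernel-verified Lean document; each statement's English description precedes it below -/
import Mathlib

section
/- Let (P,≤) be a finite poset with a coloring κ : P → C. For every order filter F of P and every color c ∈ C, one has A_c(S_c(F)) = A_c(F). -/
/-- `F` is an order filter of the poset `α`: upward closed subset. -/
def IsOrderFilter {α : Type*} [PartialOrder α] (F : Set α) : Prop :=
  ∀ ⦃x y : α⦄, x ∈ F → x ≤ y → y ∈ F

/-- `A_c(F)`: the union of all order filters `F'` with `F' \ F ⊆ κ⁻¹({c})`. -/
def Aop {α C : Type*} [PartialOrder α] (κ : α → C) (c : C) (F : Set α) : Set α :=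
  ⋃₀ {F' : Set α | IsOrderFilter F' ∧ F' \ F ⊆ κ ⁻¹' {c}}

/-- `R_c(F)`: the intersection of all order filters `F'` with `F \ F' ⊆ κ⁻¹({c})`. -/
def Rop {α C : Type*} [PartialOrder α] (κ : α → C) (c : C) (F : Set α) : Set α :=
  ⋂₀ {F' : Set α | IsOrderFilter F' ∧ F \ F' ⊆ κ ⁻¹' {c}}

open Classical in
/-- `S_c(F) := (A_c(F) \ F) ∪ R_c(F)` if this is an order filter, and `F` otherwise. -/
noncomputable def Sop {α C : Type*} [PartialOrder α] (κ : α → C) (c : C) (F : Set α) : Set α :=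
  if IsOrderFilter ((Aop κ c F \ F) ∪ Rop κ c F) then (Aop κ c F \ F) ∪ Rop κ c F else F

theorem Aop_mono_aux {α C : Type*} [PartialOrder α] (κ : α → C) (c : C) (F G : Set α)
    (h : F \ G ⊆ κ ⁻¹' {c}) : Aop κ c F ⊆ Aop κ c G := by
  rintro x ⟨F', ⟨h1, h2⟩, hx⟩
  refine ⟨F', ⟨h1, ?_⟩, hx⟩
  rintro y ⟨hy, hyG⟩
  by_cases hyF : y ∈ F
  · exact h ⟨hyF, hyG⟩
  · exact h2 ⟨hy, hyF⟩

/-- For every order filter `F` of a finite colored poset and every color `c`,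
`A_c(S_c(F)) = A_c(F)`. -/
theorem Aop_Sop_eq {α C : Type*} [PartialOrder α] [Fintype α] (κ : α → C) (c : C)
    (F : Set α) (hF : IsOrderFilter F) :
    Aop κ c (Sop κ c F) = Aop κ c F := by
  unfold Sop
  split_ifs with hS
  · apply Set.Subset.antisymm
    · apply Aop_mono_aux
      rintro x ⟨hx | hx, hxF⟩
      · obtain ⟨⟨F', ⟨_, h2⟩, hx'⟩, _⟩ := hx
        exact h2 ⟨hx', hxF⟩
      · exact absurd (hx F ⟨hF, by simp⟩) hxF
    · apply Aop_mono_aux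
      rintro x ⟨hxF, hx⟩
      by_contra hc
      refine hx (Or.inr ?_)
      rintro F' ⟨_, h2⟩
      by_contra hx'
      exact hc (h2 ⟨hxF, hx'⟩)
  · rfl
end

section
/- Let (P,≤) be a finite poset with a coloring κ : P → C. For every order filter F of P and every color c ∈ C, one has R_c(S_c(F)) = R_c(F). -/
/-- For every order filter `F` of a finite colored poset and every color `c`,
`R_c(S_c(F)) = R_c(F)`. -/
theorem Rop_Sop_eq {α C : Type*} [PartialOrder α] [Fintype α] (κ : α → C) (c : C)
    (F : Set α) (hF : IsOrderFilter F) :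
    Rop κ c (Sop κ c F) = Rop κ c F := by
  have key : ∀ x, κ x ≠ c → (x ∈ Sop κ c F ↔ x ∈ F) := by
    intro x hx
    unfold Sop
    split_ifs with h
    · constructor
      · rintro (⟨⟨F', ⟨_, h2⟩, hxF'⟩, hxF⟩ | hR)
        · exact absurd (h2 ⟨hxF', hxF⟩) hx
        · exact hR F ⟨hF, fun y hy => absurd hy.1 hy.2⟩
      · intro hxF
        right
        rintro F' ⟨_, h2⟩
        by_contra hn
        exact hx (h2 ⟨hxF, hn⟩)
    · exact Iff.rfl
  have key2 : ∀ F' : Set α, Sop κ c F \ F' ⊆ κ ⁻¹' {c} ↔ F \ F' ⊆ κ ⁻¹' {c} := by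
    intro F'
    constructor
    · intro h x hx
      by_contra hc
      exact hc (h ⟨(key x hc).2 hx.1, hx.2⟩)
    · intro h x hx
      by_contra hc
      exact hc (h ⟨(key x hc).1 hx.1, hx.2⟩)
  unfold Rop
  simp only [key2]
end

section
/- Let (P,≤) be a finite poset with a coloring κ : P → C. For every order filter F of P and every color c ∈ C, one has S_c(S_c(F)) = F; that is, the map S_c : 𝓕(P) → 𝓕(P) is an involution. -/
theorem mem_Aop_iff {α C : Type*} [PartialOrder α] (κ : α → C) (c : C) (F : Set α) (x : α) :
    x ∈ Aop κ c F ↔ ∀ y, x ≤ y → κ y ≠ c → y ∈ F := by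
  constructor
  · rintro ⟨F', ⟨h1, h2⟩, hx⟩ y hxy hy
    by_contra hn
    exact hy (h2 ⟨h1 hx hxy, hn⟩)
  · intro h
    refine ⟨{z | x ≤ z}, ⟨fun a b ha hab => le_trans ha hab, ?_⟩, le_refl x⟩
    rintro z ⟨hz, hn⟩
    by_contra hc
    exact hn (h z hz hc)

theorem mem_Rop_iff {α C : Type*} [PartialOrder α] (κ : α → C) (c : C) (F : Set α) (x : α) :
    x ∈ Rop κ c F ↔ ∃ y, y ≤ x ∧ κ y ≠ c ∧ y ∈ F := by
  constructor
  · intro h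
    refine h {z | ∃ y, y ≤ z ∧ κ y ≠ c ∧ y ∈ F} ⟨?_, ?_⟩
    · rintro a b ⟨y, h1, h2⟩ hab
      exact ⟨y, h1.trans hab, h2⟩
    · rintro z ⟨hz, hn⟩
      by_contra hc
      exact hn ⟨z, le_refl z, hc, hz⟩
  · rintro ⟨y, hyx, hy, hF⟩ F' ⟨h1, h2⟩
    refine h1 ?_ hyx
    by_contra hn
    exact hy (h2 ⟨hF, hn⟩)

/-- For every order filter `F` of a finite colored poset and every color `c`,
`S_c(S_c(F)) = F`; that is, `S_c` is an involution on the set of order filters. -/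
theorem Sop_Sop_eq {α C : Type*} [PartialOrder α] [Fintype α] (κ : α → C) (c : C)
    (F : Set α) (hF : IsOrderFilter F) :
    Sop κ c (Sop κ c F) = F := by
  by_cases h : IsOrderFilter ((Aop κ c F \ F) ∪ Rop κ c F)
  · have e : Sop κ c F = (Aop κ c F \ F) ∪ Rop κ c F := if_pos h
    rw [e]
    have hRF : ∀ x, x ∈ Rop κ c F → x ∈ F := by
      intro x hx
      obtain ⟨y, hyx, _, hy⟩ := (mem_Rop_iff κ c F x).1 hx
      exact hF hy hyx
    have hFA : ∀ x, x ∈ F → x ∈ Aop κ c F := fun x hx =>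
      (mem_Aop_iff κ c F x).2 fun y hxy _ => hF hx hxy
    have hag : ∀ y, κ y ≠ c → (y ∈ (Aop κ c F \ F) ∪ Rop κ c F ↔ y ∈ F) := by
      intro y hy
      constructor
      · rintro (⟨h1, _⟩ | h1)
        · exact (mem_Aop_iff κ c F y).1 h1 y le_rfl hy
        · exact hRF y h1
      · intro h1
        exact Or.inr ((mem_Rop_iff κ c F y).2 ⟨y, le_rfl, hy, h1⟩)
    generalize hG : (Aop κ c F \ F) ∪ Rop κ c F = G at hag
    have hA : Aop κ c G = Aop κ c F := by
      ext x
      rw [mem_Aop_iff, mem_Aop_iff]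
      exact ⟨fun k y a b => (hag y b).1 (k y a b), fun k y a b => (hag y b).2 (k y a b)⟩
    have hR : Rop κ c G = Rop κ c F := by
      ext x
      rw [mem_Rop_iff, mem_Rop_iff]
      exact ⟨fun ⟨y, a, b, d⟩ => ⟨y, a, b, (hag y b).1 d⟩,
        fun ⟨y, a, b, d⟩ => ⟨y, a, b, (hag y b).2 d⟩⟩
    have key : (Aop κ c G \ G) ∪ Rop κ c G = F := by
      rw [hA, hR, ← hG]
      ext x
      have h1 := hRF x
      have h2 := hFA x
      simp only [Set.mem_union, Set.mem_diff]
      tauto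
    unfold Sop
    rw [key, if_pos hF]
  · have e : Sop κ c F = F := if_neg h
    rw [e, e]
end

section
/- Let (P,≤) be a finite poset with a coloring κ : P → C satisfying: (a) if x is covered by y in P, or if x and y are distinct and incomparable, then κ(x) ≠ κ(y); (b) for each c ∈ C, the set κ⁻¹({c}) is totally ordered. Then for every order filter F of P and every color c ∈ C, the symmetric difference of F and S_c(F) has at most one element. -/
theorem aux_eq {α C : Type*} [PartialOrder α] [Finite α] (κ : α → C)
    (ha : ∀ x y : α, ((x ⋖ y) ∨ (x ≠ y ∧ ¬ x ≤ y ∧ ¬ y ≤ x)) → κ x ≠ κ y)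
    (c : C) (x y : α) (hxy : x ≤ y) (h : ∀ z, x ≤ z → z ≤ y → κ z = c) : x = y := by
  by_contra hne
  obtain ⟨z, hz, hzy⟩ := exists_covBy_le_of_lt (lt_of_le_of_ne hxy hne)
  exact ha x z (Or.inl hz) ((h x le_rfl hxy).trans (h z hz.le hzy).symm)

theorem Aop_filter {α C : Type*} [PartialOrder α] (κ : α → C) (c : C) (F : Set α) :
    IsOrderFilter (Aop κ c F) := by
  rintro x y ⟨G, hG, hx⟩ hxy
  exact ⟨G, hG, hG.1 hx hxy⟩

theorem Rop_filter {α C : Type*} [PartialOrder α] (κ : α → C) (c : C) (F : Set α) :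
    IsOrderFilter (Rop κ c F) := by
  intro x y hx hxy G hG
  exact hG.1 (hx G hG) hxy

theorem Aop_color {α C : Type*} [PartialOrder α] (κ : α → C) (c : C) (F : Set α) (x : α)
    (hx : x ∈ Aop κ c F) (hn : x ∉ F) : κ x = c := by
  obtain ⟨G, hG, hxG⟩ := hx
  exact hG.2 ⟨hxG, hn⟩

theorem Rop_color {α C : Type*} [PartialOrder α] (κ : α → C) (c : C) (F : Set α) (x : α)
    (hx : x ∈ F) (hn : x ∉ Rop κ c F) : κ x = c := by
  by_contra hc
  exact hn fun G hG => by
    by_contra hxG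
    exact hc (hG.2 ⟨hx, hxG⟩)

theorem Rop_subset {α C : Type*} [PartialOrder α] (κ : α → C) (c : C) (F : Set α)
    (hF : IsOrderFilter F) : Rop κ c F ⊆ F := fun x hx =>
  hx F ⟨hF, fun y hy => absurd hy.1 hy.2⟩

/-- In a finite colored poset where (a) elements in a covering relation, or distinct
incomparable elements, have distinct colors, and (b) each color class is totally ordered,
the symmetric difference of `F` and `S_c(F)` has at most one element. -/
theorem symmDiff_Sop_subsingleton {α C : Type*} [PartialOrder α] [Fintype α] (κ : α → C)
    (ha : ∀ x y : α, ((x ⋖ y) ∨ (x ≠ y ∧ ¬ x ≤ y ∧ ¬ y ≤ x)) → κ x ≠ κ y)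
    (hb : ∀ c : C, ∀ x ∈ κ ⁻¹' {c}, ∀ y ∈ κ ⁻¹' {c}, x ≤ y ∨ y ≤ x)
    (F : Set α) (hF : IsOrderFilter F) (c : C) :
    (symmDiff F (Sop κ c F)).Subsingleton := by
  unfold Sop
  split_ifs with hS
  swap
  · simp
  have key : ∀ x ∈ symmDiff F ((Aop κ c F \ F) ∪ Rop κ c F),
      (x ∈ Aop κ c F ∧ x ∉ F) ∨ (x ∈ F ∧ x ∉ Rop κ c F) := by
    rintro x (⟨h1, h2⟩ | ⟨h1 | h1, h2⟩)
    · exact Or.inr ⟨h1, fun h => h2 (Or.inr h)⟩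
    · exact Or.inl h1
    · exact absurd (Rop_subset κ c F hF h1) h2
  have col : ∀ x, ((x ∈ Aop κ c F ∧ x ∉ F) ∨ (x ∈ F ∧ x ∉ Rop κ c F)) → κ x = c := by
    rintro x (h | h)
    · exact Aop_color κ c F x h.1 h.2
    · exact Rop_color κ c F x h.1 h.2
  have main : ∀ x y, ((x ∈ Aop κ c F ∧ x ∉ F) ∨ (x ∈ F ∧ x ∉ Rop κ c F)) →
      ((y ∈ Aop κ c F ∧ y ∉ F) ∨ (y ∈ F ∧ y ∉ Rop κ c F)) → x ≤ y → x = y := by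
    intro x y hx hy hxy
    refine aux_eq κ ha c x y hxy fun z hxz hzy => col z ?_
    rcases hx with hx | hx <;> rcases hy with hy | hy
    · exact Or.inl ⟨Aop_filter κ c F hx.1 hxz, fun h => hy.2 (hF h hzy)⟩
    · rcases hS (Or.inl hx) hxy with h | h
      · exact absurd hy.1 h.2
      · exact absurd h hy.2
    · exact absurd (hF hx.1 hxy) hy.2
    · exact Or.inr ⟨hF hx.1 hxz, fun h => hy.2 (Rop_filter κ c F h hzy)⟩
  intro x hx y hy
  have hx' := key x hx
  have hy' := key y hy
  rcases hb c x (col x hx') y (col y hy') with h | h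
  · exact main x y hx' hy' h
  · exact (main y x hy' hx' h).symm
end

section
/- Let (P,≤) be a finite poset with a coloring κ : P → C satisfying: (a) if x is covered by y in P, or if x and y are distinct and incomparable, then κ(x) ≠ κ(y); (b) for each c ∈ C, the set κ⁻¹({c}) is totally ordered. Then for all order filters F, F' of P, one has F ⊆ F' if and only if F ⊴ F'. In particular, (𝓕(P),⊆) and (𝓕(P),⊴) are identical as posets. -/
/-- One step of the order `⊴`: `F'` is obtained from `F` by applying some `S_c`
with `S_c(F) = F' ⊋ F`. -/
def SStep {α C : Type*} [PartialOrder α] (κ : α → C) (F F' : Set α) : Prop :=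
  ∃ c : C, Sop κ c F = F' ∧ F ⊂ F'

/-- Adding a maximal element of the complement is one `SStep`. -/
theorem SStep_insert {α C : Type*} [PartialOrder α] [Fintype α] (κ : α → C)
    (ha : ∀ x y : α, ((x ⋖ y) ∨ (x ≠ y ∧ ¬ x ≤ y ∧ ¬ y ≤ x)) → κ x ≠ κ y)
    (F : Set α) (hF : IsOrderFilter F) (x : α) (hx : x ∉ F) (hmax : ∀ y, x < y → y ∈ F) :
    IsOrderFilter (insert x F) ∧ SStep κ F (insert x F) := by
  classical
  letI := Fintype.toLocallyFiniteOrder (α := α)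
  have hins : IsOrderFilter (insert x F) := by
    rintro a b (rfl | h) hab
    · rcases hab.eq_or_lt with rfl | h
      · exact Or.inl rfl
      · exact Or.inr (hmax _ h)
    · exact Or.inr (hF h hab)
  have hcomp : ∀ y, κ y = κ x → y = x ∨ x < y ∨ y < x := by
    intro y hy
    by_contra hcon
    push Not at hcon
    obtain ⟨h1, h2, h3⟩ := hcon
    exact ha y x (Or.inr ⟨h1, fun h => h3 (lt_of_le_of_ne h h1),
      fun h => h2 (lt_of_le_of_ne h (Ne.symm h1))⟩) hy
  have hA : Aop κ (κ x) F = insert x F := by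
    apply Set.Subset.antisymm
    · rintro y ⟨G, ⟨hG, hGF⟩, hy⟩
      by_cases hyF : y ∈ F
      · exact Or.inr hyF
      have hyc : κ y = κ x := hGF ⟨hy, hyF⟩
      rcases hcomp y hyc with h | h | h
      · exact Or.inl h
      · exact Or.inr (hmax y h)
      · obtain ⟨z, hyz, hzx⟩ := exists_covBy_le_of_lt h
        have hzc : κ z = κ x := hGF ⟨hG hy hyz.le, fun hz => hx (hF hz hzx)⟩
        exact absurd (hyc.trans hzc.symm) (ha y z (Or.inl hyz))
    · intro y hy
      refine ⟨insert x F, ⟨hins, ?_⟩, hy⟩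
      rintro z ⟨rfl | h, h2⟩
      · rfl
      · exact absurd h h2
  have hR : Rop κ (κ x) F = F := by
    apply Set.Subset.antisymm
    · intro y hy
      exact hy F ⟨hF, fun z hz => absurd hz.1 hz.2⟩
    · rintro y hy G ⟨hG, hGF⟩
      by_contra hyG
      have hyc : κ y = κ x := hGF ⟨hy, hyG⟩
      rcases hcomp y hyc with h | h | h
      · exact hx (h ▸ hy)
      · obtain ⟨z, hxz, hzy⟩ := exists_covBy_le_of_lt h
        have hzc : κ z = κ x := hGF ⟨hmax z hxz.lt, fun hz => hyG (hG hz hzy)⟩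
        exact ha x z (Or.inl hxz) hzc.symm
      · exact hx (hF hy h.le)
  have hS : (Aop κ (κ x) F \ F) ∪ Rop κ (κ x) F = insert x F := by
    rw [hA, hR, Set.diff_union_self]
    exact Set.union_eq_left.2 (Set.subset_insert x F)
  refine ⟨hins, κ x, ?_, Set.ssubset_insert hx⟩
  unfold Sop
  rw [hS, if_pos hins]

/-- In a finite colored poset where (a) elements in a covering relation, or distinct
incomparable elements, have distinct colors, and (b) each color class is totally ordered,
for order filters `F, F'` one has `F ⊆ F'` iff `F ⊴ F'`, where `⊴` is the reflexive
transitive closure of the relation `SStep`. -/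
theorem subset_iff_SStep_reflTransGen {α C : Type*} [PartialOrder α] [Fintype α] (κ : α → C)
    (ha : ∀ x y : α, ((x ⋖ y) ∨ (x ≠ y ∧ ¬ x ≤ y ∧ ¬ y ≤ x)) → κ x ≠ κ y)
    (hb : ∀ c : C, ∀ x ∈ κ ⁻¹' {c}, ∀ y ∈ κ ⁻¹' {c}, x ≤ y ∨ y ≤ x)
    (F F' : Set α) (hF : IsOrderFilter F) (hF' : IsOrderFilter F') :
    F ⊆ F' ↔ Relation.ReflTransGen (SStep κ) F F' := by
  constructor
  · intro h
    induction hn : (F' \ F).ncard using Nat.strong_induction_on generalizing F with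
    | _ n ih =>
      rcases h.eq_or_ssubset with rfl | hss
      · exact Relation.ReflTransGen.refl
      · have hne : (F' \ F).Nonempty := Set.nonempty_of_ssubset hss
        obtain ⟨x, hxm⟩ := (Set.toFinite (F' \ F)).exists_maximal hne
        have hmax : ∀ y, x < y → y ∈ F := by
          intro y hy
          by_contra hyF
          exact hxm.not_gt ⟨hF' hxm.prop.1 hy.le, hyF⟩ hy
        obtain ⟨h1, h2⟩ := SStep_insert κ ha F hF x hxm.prop.2 hmax
        refine Relation.ReflTransGen.head h2
          (ih _ ?_ _ h1 (Set.insert_subset hxm.prop.1 h) rfl)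
        rw [← hn]
        refine Set.ncard_lt_ncard ?_ (Set.toFinite _)
        refine ⟨Set.diff_subset_diff_right (Set.subset_insert x F), fun hc => ?_⟩
        exact (hc hxm.prop).2 (Set.mem_insert x F)
  · intro h
    clear hF hF'
    induction h with
    | refl => exact subset_rfl
    | tail _ hs ih =>
      obtain ⟨_, _, hss⟩ := hs
      exact ih.trans hss.subset
end

section
/- Fix n ≥ 1 and let the symmetric group S_{2n} act on ℤ^{2n} by permuting coordinates. Let Ŵ := {w ∈ S_{2n} : w(2n+1−i) = 2n+1−w(i) for all i}, let λ ∈ ℤ^{2n} satisfy λ_1 ≥ λ_2 ≥ … ≥ λ_{2n}, and define π : ℤ^{2n} → ℤ^n by π(μ)_i := μ_i − μ_{2n+1−i} for 1 ≤ i ≤ n. Then for all μ₁, μ₂ ∈ Ŵλ := {w·λ : w ∈ Ŵ}, if π(μ₁) = π(μ₂) then μ₁ = μ₂. (This is the type A_{2n−1} instance of the statement that the restriction map is injective on the σ-fixed part Ŵλ of the Weyl group orbit through a dominant integral weight.) -/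
/-- The action of `S_N` (permutations of `Fin N`) on `ℤ^N`: `(w·μ)_i = μ_{w⁻¹(i)}`. -/
def permAct {N : ℕ} (w : Equiv.Perm (Fin N)) (μ : Fin N → ℤ) : Fin N → ℤ :=
  fun i => μ (w.symm i)

/-- `w ∈ Ŵ`: the permutation `w` of `{1,…,2n}` satisfies `w(2n+1−i) = 2n+1−w(i)`
for all `i` (in 0-indexed terms, `w` commutes with `Fin.rev`). -/
def InWhat (n : ℕ) (w : Equiv.Perm (Fin (2 * n))) : Prop :=
  ∀ i : Fin (2 * n), w i.rev = (w i).rev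

/-- The restriction map `π : ℤ^{2n} → ℤ^n`, `π(μ)_i = μ_i − μ_{2n+1−i}`. -/
def resMap (n : ℕ) (μ : Fin (2 * n) → ℤ) : Fin n → ℤ :=
  fun i => μ (Fin.castLE (by omega) i) - μ (Fin.castLE (by omega) i).rev

/-- If `λ ∈ ℤ^{2n}` is weakly decreasing and `μ₁, μ₂ ∈ Ŵλ` satisfy `π(μ₁) = π(μ₂)`,
then `μ₁ = μ₂`: the restriction map is injective on the σ-fixed part `Ŵλ` of the
Weyl group orbit (type `A_{2n−1}` folded to type `C_n`). -/
theorem resMap_injOn_hatW_orbit (n : ℕ) (hn : 1 ≤ n)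
    (lam : Fin (2 * n) → ℤ) (hlam : ∀ i j : Fin (2 * n), i ≤ j → lam j ≤ lam i)
    (μ₁ μ₂ : Fin (2 * n) → ℤ)
    (h₁ : ∃ w : Equiv.Perm (Fin (2 * n)), InWhat n w ∧ μ₁ = permAct w lam)
    (h₂ : ∃ w : Equiv.Perm (Fin (2 * n)), InWhat n w ∧ μ₂ = permAct w lam)
    (h : resMap n μ₁ = resMap n μ₂) :
    μ₁ = μ₂ := by
  have key : ∀ a b : Fin (2 * n), lam a - lam a.rev = lam b - lam b.rev → lam a = lam b := by
    intro a b hab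
    rcases le_total a b with hle | hle
    · have e1 := hlam a b hle
      have e2 := hlam b.rev a.rev (Fin.rev_le_rev.mpr hle)
      omega
    · have e1 := hlam b a hle
      have e2 := hlam a.rev b.rev (Fin.rev_le_rev.mpr hle)
      omega
  have hsymm : ∀ w : Equiv.Perm (Fin (2 * n)), InWhat n w →
      ∀ i, w.symm i.rev = (w.symm i).rev := by
    intro w hw i
    rw [Equiv.symm_apply_eq, hw, Equiv.apply_symm_apply]
  have hall : ∀ i : Fin (2 * n), μ₁ i - μ₁ i.rev = μ₂ i - μ₂ i.rev := by
    intro i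
    by_cases hi : i.val < n
    · exact congrFun h ⟨i.val, hi⟩
    · have hr : i.rev.val < n := by
        rw [Fin.val_rev]
        omega
      have e : μ₁ i.rev - μ₁ i.rev.rev = μ₂ i.rev - μ₂ i.rev.rev :=
        congrFun h ⟨i.rev.val, hr⟩
      rw [Fin.rev_rev] at e
      omega
  obtain ⟨u, hu, rfl⟩ := h₁
  obtain ⟨v, hv, rfl⟩ := h₂
  funext i
  have e := hall i
  simp only [permAct, hsymm u hu, hsymm v hv] at e
  exact key _ _ e
end

section
/- Fix n ≥ 1 and let the symmetric group S_{2n} act on ℤ^{2n} by permuting coordinates. For μ, ν ∈ ℤ^{2n}, write μ ≤_s^A ν if there is a sequence μ = μ_0, μ_1, …, μ_k = ν such that each μ_{t+1} is obtained from μ_t by swapping two coordinates a < b with (μ_t)_a > (μ_t)_b. For ξ, η ∈ ℤ^n, write ξ ≤_s^C η if there is a sequence ξ = ξ_0, ξ_1, …, ξ_k = η in which each step is one of: (i) swap coordinates a < b when (ξ_t)_a > (ξ_t)_b; (ii) replace the pair ((ξ_t)_a, (ξ_t)_b) with a < b by (−(ξ_t)_b, −(ξ_t)_a) when (ξ_t)_a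 + (ξ_t)_b > 0; (iii) replace (ξ_t)_a by −(ξ_t)_a when (ξ_t)_a > 0. Let Ŵ := {w ∈ S_{2n} : w(2n+1−i) = 2n+1−w(i) for all i}, let λ ∈ ℤ^{2n} satisfy λ_1 ≥ λ_2 ≥ … ≥ λ_{2n}, and define π : ℤ^{2n} → ℤ^n by π(μ)_i := μ_i − μ_{2n+1−i} for 1 ≤ i ≤ n. Then for all μ₁, μ₂ ∈ Ŵλ := {w·λ : w ∈ Ŵ}: μ₁ ≤_s^A μ₂ if and only if π(μ₁) ≤_s^C π(μ₂). -/
/-- One step of the strong order `≤_s^A` of type `A_{N−1}` on `ℤ^N`: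
swap two coordinates `a < b` when `μ_a > μ_b`. -/
def stepA {N : ℕ} (μ ν : Fin N → ℤ) : Prop :=
  ∃ a b : Fin N, a < b ∧ μ b < μ a ∧ ν = μ ∘ Equiv.swap a b

/-- The strong order `≤_s^A` on `ℤ^N`. -/
def leA {N : ℕ} : (Fin N → ℤ) → (Fin N → ℤ) → Prop :=
  Relation.ReflTransGen stepA

/-- One step of the strong order `≤_s^C` of type `C_N` on `ℤ^N`: either
(i) swap coordinates `a < b` when `ξ_a > ξ_b`; or
(ii) replace `(ξ_a, ξ_b)` (`a < b`) by `(−ξ_b, −ξ_a)` when `ξ_a + ξ_b > 0`; or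
(iii) replace `ξ_a` by `−ξ_a` when `ξ_a > 0`. -/
def stepC {N : ℕ} (ξ η : Fin N → ℤ) : Prop :=
  (∃ a b : Fin N, a < b ∧ ξ b < ξ a ∧ η = ξ ∘ Equiv.swap a b) ∨
  (∃ a b : Fin N, a < b ∧ 0 < ξ a + ξ b ∧
    η = fun k => if k = a then -ξ b else if k = b then -ξ a else ξ k) ∨
  (∃ a : Fin N, 0 < ξ a ∧ η = Function.update ξ a (-ξ a))

/-- The strong order `≤_s^C` on `ℤ^N`. -/
def leC {N : ℕ} : (Fin N → ℤ) → (Fin N → ℤ) → Prop :=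
  Relation.ReflTransGen stepC

/-- Counting function. -/
def cnt {N : ℕ} (X : Fin N → ℤ) (k : ℕ) (t : ℤ) : ℤ :=
  ∑ p : Fin N, if p.val < k ∧ t ≤ X p then 1 else 0

/-- Dominance. -/
def Dom {N : ℕ} (X Y : Fin N → ℤ) : Prop :=
  (∀ k t, cnt Y k t ≤ cnt X k t) ∧ ∀ t, cnt X N t = cnt Y N t

lemma cnt_swap {N : ℕ} (X : Fin N → ℤ) (a b : Fin N) (hab : a ≠ b) (k : ℕ) (t : ℤ) :
    cnt (X ∘ Equiv.swap a b) k t = cnt X k t +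
      (((if a.val < k then 1 else 0) - (if b.val < k then 1 else 0)) *
       ((if t ≤ X b then 1 else 0) - (if t ≤ X a then 1 else 0))) := by
  have h : ∀ p : Fin N, (if p.val < k ∧ t ≤ (X ∘ Equiv.swap a b) p then (1:ℤ) else 0) =
      (if p.val < k ∧ t ≤ X p then 1 else 0) +
      (if p = a then (if a.val < k then 1 else 0) *
        ((if t ≤ X b then 1 else 0) - (if t ≤ X a then 1 else 0)) else 0) +
      (if p = b then (if b.val < k then 1 else 0) *
        ((if t ≤ X a then 1 else 0) - (if t ≤ X b then 1 else 0)) else 0) := by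
    intro p
    by_cases hpa : p = a
    · subst hpa
      simp only [Function.comp, Equiv.swap_apply_left, hab, if_true, if_false]
      split_ifs <;> simp_all
    · by_cases hpb : p = b
      · subst hpb
        simp only [Function.comp, Equiv.swap_apply_right, hpa, if_true, if_false]
        split_ifs <;> simp_all
      · simp [Function.comp, Equiv.swap_apply_of_ne_of_ne hpa hpb, hpa, hpb]
  unfold cnt
  rw [Finset.sum_congr rfl (fun p _ => h p)]
  rw [Finset.sum_add_distrib, Finset.sum_add_distrib, Finset.sum_ite_eq', Finset.sum_ite_eq']
  simp only [Finset.mem_univ, if_true]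
  ring

lemma cnt_swap_lt {N : ℕ} (X : Fin N → ℤ) (a b : Fin N) (hab : a < b) (hX : X b < X a)
    (k : ℕ) (t : ℤ) :
    cnt (X ∘ Equiv.swap a b) k t = cnt X k t -
      if (a.val < k ∧ k ≤ b.val) ∧ (X b < t ∧ t ≤ X a) then 1 else 0 := by
  have hab' : a.val < b.val := hab
  rw [cnt_swap X a b hab.ne]
  split_ifs <;> simp <;> omega

lemma cnt_zero_pre {N : ℕ} (X Y : Fin N → ℤ) (k : ℕ) (h : ∀ p : Fin N, p.val < k → X p = Y p)
    (t : ℤ) : cnt X k t = cnt Y k t := by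
  unfold cnt
  refine Finset.sum_congr rfl fun p _ => ?_
  by_cases hp : p.val < k
  · rw [h p hp]
  · simp [hp]

lemma stepA_cnt {N : ℕ} {X Y : Fin N → ℤ} (h : stepA X Y) : Dom X Y := by
  obtain ⟨a, b, hab, hX, rfl⟩ := h
  have hab' : a.val < b.val := hab
  constructor
  · intro k t
    rw [cnt_swap X a b hab.ne]
    split_ifs <;> simp <;> omega
  · intro t
    rw [cnt_swap X a b hab.ne]
    simp

lemma Dom.refl {N : ℕ} (X : Fin N → ℤ) : Dom X X := ⟨fun _ _ => le_rfl, fun _ => rfl⟩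

lemma Dom.trans {N : ℕ} {X Y Z : Fin N → ℤ} (h : Dom X Y) (h' : Dom Y Z) : Dom X Z :=
  ⟨fun k t => (h'.1 k t).trans (h.1 k t), fun t => (h.2 t).trans (h'.2 t)⟩

lemma leA_dom {N : ℕ} {X Y : Fin N → ℤ} (h : leA X Y) : Dom X Y := by
  induction h with
  | refl => exact Dom.refl _
  | tail _ h ih => exact ih.trans (stepA_cnt h)

lemma strict_of_gap {N : ℕ} {X Y : Fin N → ℤ} (h : Dom X Y) (i : Fin N)
    (hpre : ∀ p < i, X p = Y p) (k : ℕ) (hik : i.val < k)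
    (hgap : ∀ p : Fin N, i < p → p.val < k → Y i ≤ X p → X i ≤ X p)
    (t : ℤ) (ht : Y i < t) (ht' : t ≤ X i) : cnt Y k t + 1 ≤ cnt X k t := by
  have h0 := h.1 k (Y i)
  have h1 : cnt Y k t + cnt X k (Y i) + 1 ≤ cnt X k t + cnt Y k (Y i) := by
    have e : (1:ℤ) = ∑ p : Fin N, if p = i then 1 else 0 := by simp
    rw [e]
    unfold cnt
    rw [← Finset.sum_add_distrib, ← Finset.sum_add_distrib, ← Finset.sum_add_distrib]
    refine Finset.sum_le_sum fun p _ => ?_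
    by_cases hpk : p.val < k
    · rcases lt_trichotomy p i with hp | hp | hp
      · simp only [hpre p hp, hp.ne, hpk, if_false]; omega
      · subst hp
        have e1 : ¬ t ≤ Y p := by omega
        have e2 : Y p ≤ X p := by omega
        simp [hpk, e1, e2, ht']
      · have := hgap p hp hpk
        simp only [hpk, true_and, hp.ne', if_false]
        split_ifs <;> omega
    · have : p ≠ i := by rintro rfl; exact hpk hik
      simp [hpk, this]
  omega

lemma key {N : ℕ} {X Y : Fin N → ℤ} (h : Dom X Y) (hne : X ≠ Y) :
    ∃ i j : Fin N, i < j ∧ X j < X i ∧ (∀ p < i, X p = Y p) ∧ Y i ≤ X j ∧ Y i < X i ∧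
      (∀ p : Fin N, i < p → p < j → Y i ≤ X p → X i ≤ X p) ∧
      (∀ k t, i.val < k → k ≤ j.val → X j < t → t ≤ X i → cnt Y k t + 1 ≤ cnt X k t) := by
  classical
  have hex : ∃ m : ℕ, ∃ hm : m < N, X ⟨m, hm⟩ ≠ Y ⟨m, hm⟩ := by
    by_contra hc
    push Not at hc
    exact hne (funext fun p => hc p.1 p.2)
  obtain ⟨hiN, hi⟩ := Nat.find_spec hex
  have hmin := fun m => @Nat.find_min _ _ hex m
  generalize Nat.find hex = m at *
  set i : Fin N := ⟨m, hiN⟩ with hidef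
  have hpre : ∀ p < i, X p = Y p := by
    intro p hp
    by_contra hc
    exact hmin p.1 hp ⟨p.2, hc⟩
  have hlt : Y i < X i := by
    have h0 := h.1 (m+1) (Y i)
    have h1 := cnt_zero_pre X Y m (fun p hp => hpre p hp) (Y i)
    have hs : ∀ Z : Fin N → ℤ, ∀ t, cnt Z (m+1) t = cnt Z m t + if t ≤ Z i then 1 else 0 := by
      intro Z t
      unfold cnt
      have e : (if t ≤ Z i then (1:ℤ) else 0) =
        ∑ p : Fin N, if p = i then (if t ≤ Z i then (1:ℤ) else 0) else 0 := by simp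
      rw [e, ← Finset.sum_add_distrib]
      refine Finset.sum_congr rfl fun p _ => ?_
      by_cases hp : p = i
      · subst hp; simp [hidef]
      · have : p.val ≠ m := fun hc => hp (Fin.ext hc)
        have : p.val < m + 1 ↔ p.val < m := by omega
        simp [hp, this]
    rw [hs, hs, h1] at h0
    simp at h0
    split_ifs at h0 <;> omega
  have hex2 : ∃ q : ℕ, ∃ hq : q < N, m < q ∧ Y i ≤ X ⟨q, hq⟩ ∧ X ⟨q, hq⟩ < X i := by
    by_contra hc
    push Not at hc
    have := strict_of_gap h i hpre N hiN (fun p hp _ hy => hc p.1 p.2 hp hy) (X i) hlt le_rfl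
    have := h.2 (X i)
    omega
  obtain ⟨hjN, hj1, hj2, hj3⟩ := Nat.find_spec hex2
  have hmin2 := fun m => @Nat.find_min _ _ hex2 m
  generalize Nat.find hex2 = q at *
  have hgap : ∀ p : Fin N, i < p → p < ⟨q, hjN⟩ → Y i ≤ X p → X i ≤ X p := by
    intro p hp hpq hy
    by_contra hc
    exact hmin2 p.1 hpq ⟨p.2, hp, hy, not_le.mp hc⟩
  refine ⟨i, ⟨q, hjN⟩, hj1, hj3, hpre, hj2, hlt, hgap, ?_⟩
  intro k t hk1 hk2 ht1 ht2
  exact strict_of_gap h i hpre k hk1 (fun p hp hpk => hgap p hp (Fin.lt_def.mpr (lt_of_lt_of_le hpk hk2))) t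
    (by omega) ht2

lemma dom_induct {N : ℕ} (Y : Fin N → ℤ) (P : (Fin N → ℤ) → Prop)
    (R : (Fin N → ℤ) → (Fin N → ℤ) → Prop)
    (H : ∀ X, P X → Dom X Y → X ≠ Y → ∃ X', P X' ∧ Dom X' Y ∧ R X X' ∧
      (∀ k t, cnt X' k t ≤ cnt X k t) ∧
      (∃ p : Fin N, cnt X' (p.val + 1) (X p) < cnt X (p.val + 1) (X p)) ∧
      (∀ p, ∃ q, X' p = X q)) (X : Fin N → ℤ) (hP : P X) (hD : Dom X Y) :
    Relation.ReflTransGen R X Y := by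
  obtain ⟨B, hB⟩ : ∃ B : ℤ, ∀ p, |X p| ≤ B :=
    ⟨∑ p, |X p|, fun p => Finset.single_le_sum (f := fun p => |X p|)
      (fun _ _ => abs_nonneg _) (Finset.mem_univ p)⟩
  have main : ∀ m : ℕ, ∀ X : Fin N → ℤ, (∀ p, |X p| ≤ B) → P X → Dom X Y →
      (∑ k ∈ Finset.range (N+1), ∑ t ∈ Finset.Icc (-B) B, (cnt X k t - cnt Y k t)) < m →
      Relation.ReflTransGen R X Y := by
    intro m
    induction m with
    | zero =>
      intro X hB hP hD hlt
      exfalso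
      have : 0 ≤ (∑ k ∈ Finset.range (N+1), ∑ t ∈ Finset.Icc (-B) B, (cnt X k t - cnt Y k t)) :=
        Finset.sum_nonneg fun k _ => Finset.sum_nonneg fun t _ => sub_nonneg.mpr (hD.1 k t)
      simp at hlt
      simp at this
      omega
    | succ m ih =>
      intro X hB hP hD hlt
      by_cases hXY : X = Y
      · subst hXY; exact Relation.ReflTransGen.refl
      obtain ⟨X', hP', hD', hR, hle, ⟨p, hp⟩, hv⟩ := H X hP hD hXY
      refine Relation.ReflTransGen.head hR (ih X' ?_ hP' hD' ?_)
      · intro p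
        obtain ⟨q, hq⟩ := hv p
        rw [hq]; exact hB q
      · have : (∑ k ∈ Finset.range (N+1), ∑ t ∈ Finset.Icc (-B) B, (cnt X' k t - cnt Y k t)) <
          (∑ k ∈ Finset.range (N+1), ∑ t ∈ Finset.Icc (-B) B, (cnt X k t - cnt Y k t)) := by
          refine Finset.sum_lt_sum (fun k _ => Finset.sum_le_sum fun t _ => ?_) ⟨p.val + 1, ?_, ?_⟩
          · have := hle k t; omega
          · simp
          · refine Finset.sum_lt_sum (fun t _ => ?_) ⟨X p, ?_, ?_⟩
            · have := hle (p.val+1) t; omega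
            · have := abs_le.mp (hB p)
              simp [this]
            · omega
        push_cast at hlt
        omega
  refine main (Int.toNat (∑ k ∈ Finset.range (N+1), ∑ t ∈ Finset.Icc (-B) B,
    (cnt X k t - cnt Y k t)) + 1) X hB hP hD ?_
  omega

lemma dom_leA {N : ℕ} {X Y : Fin N → ℤ} (h : Dom X Y) : leA X Y := by
  refine dom_induct Y (fun _ => True) stepA ?_ X trivial h
  intro X _ hD hne
  obtain ⟨i, j, hij, hX, hpre, h1, h2, h3, h4⟩ := key hD hne
  have hst : stepA X (X ∘ Equiv.swap i j) := ⟨i, j, hij, hX, rfl⟩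
  have hij' : i.val < j.val := hij
  have hs := stepA_cnt hst
  refine ⟨X ∘ Equiv.swap i j, trivial, ⟨?_, fun t => (hs.2 t).symm.trans (hD.2 t)⟩, hst, hs.1,
    ⟨i, ?_⟩, fun p => ⟨_, rfl⟩⟩
  · intro k t
    have a1 := h4 k t
    have a2 := hD.1 k t
    rw [cnt_swap_lt X i j hij hX]
    split_ifs <;> omega
  · rw [cnt_swap_lt X i j hij hX]
    split_ifs <;> omega

lemma leA_iff_dom {N : ℕ} {X Y : Fin N → ℤ} : leA X Y ↔ Dom X Y := ⟨leA_dom, dom_leA⟩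

/-- Antisymmetric. -/
def Anti {N : ℕ} (X : Fin N → ℤ) : Prop := ∀ p, X p.rev = - X p

lemma cnt_anti {N : ℕ} (X : Fin N → ℤ) (hX : Anti X) (k : ℕ) (hk : k ≤ N) (t : ℤ) :
    cnt X k t + cnt X N (1 - t) =
      (∑ p : Fin N, if N - k ≤ p.val then (1:ℤ) else 0) + cnt X (N - k) (1 - t) := by
  have e : cnt X k t = ∑ p : Fin N, if p.rev.val < k ∧ t ≤ X p.rev then 1 else 0 := by
    unfold cnt
    exact (Equiv.sum_comp Fin.revPerm (fun p : Fin N =>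
      if p.val < k ∧ t ≤ X p then (1:ℤ) else 0)).symm
  rw [e]
  unfold cnt
  rw [← Finset.sum_add_distrib, ← Finset.sum_add_distrib]
  refine Finset.sum_congr rfl fun p _ => ?_
  have hp := p.2
  rw [hX p, Fin.val_rev]
  split_ifs <;> omega

lemma cnt_anti_diff {N : ℕ} {X Y : Fin N → ℤ} (hX : Anti X) (hY : Anti Y) (hD : Dom X Y)
    (k : ℕ) (hk : k ≤ N) (t : ℤ) :
    cnt X k t - cnt Y k t = cnt X (N - k) (1 - t) - cnt Y (N - k) (1 - t) := by
  have h1 := cnt_anti X hX k hk t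
  have h2 := cnt_anti Y hY k hk t
  have h3 := hD.2 (1 - t)
  omega

/-- First half. -/
def half (n : ℕ) (X : Fin (2 * n) → ℤ) : Fin n → ℤ := fun i => X (Fin.castLE (by omega) i)

lemma swap_rev {N : ℕ} (a b p : Fin N) :
    Equiv.swap a b p.rev = (Equiv.swap a.rev b.rev p).rev := by
  simp only [Equiv.swap_apply_def]
  have h : ∀ x : Fin N, p.rev = x ↔ p = x.rev := fun x => by
    rw [← Fin.rev_inj, Fin.rev_rev]
  simp only [h]
  split_ifs <;> simp

lemma anti_step (n : ℕ) {X Y : Fin (2 * n) → ℤ} (hY : Anti Y) (hX : Anti X) (hD : Dom X Y)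
    (hne : X ≠ Y) : ∃ X', Anti X' ∧ Dom X' Y ∧ stepC (half n X) (half n X') ∧
      (∀ k t, cnt X' k t ≤ cnt X k t) ∧
      (∃ p : Fin (2 * n), cnt X' (p.val + 1) (X p) < cnt X (p.val + 1) (X p)) ∧
      (∀ p, ∃ q, X' p = X q) := by
  obtain ⟨i, j, hij, hXij, hpre, h1, h2, h3, h4⟩ := key hD hne
  have hij' : i.val < j.val := hij
  have hi2 := i.2
  have hj2 := j.2
  have hri := Fin.val_rev i
  have hrj := Fin.val_rev j
  have hjr : j.val ≤ 2 * n - 1 - i.val := by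
    by_contra hc
    have a1 := cnt_anti_diff hX hY hD i.val (by omega) (1 - X i)
    have a2 := cnt_zero_pre X Y i.val (fun p hp => hpre p hp) (1 - X i)
    have e : 1 - (1 - X i) = X i := by ring
    rw [e] at a1
    by_cases hlt : i.val < 2 * n - i.val
    · have a3 := h4 (2 * n - i.val) (X i) hlt (by omega) hXij le_rfl
      omega
    · have b1 : i.rev < i := by
        rw [Fin.lt_def]; omega
      have b2 := hpre _ b1
      rw [hX, hY] at b2
      omega
  have h4' : ∀ k t, 2 * n - 1 - j.val < k → k ≤ 2 * n - 1 - i.val → - X i < t → t ≤ - X j →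
      cnt Y k t + 1 ≤ cnt X k t := by
    intro k t k1 k2 t1 t2
    have a1 := cnt_anti_diff hX hY hD k (by omega) t
    have a2 := h4 (2 * n - k) (1 - t) (by omega) (by omega) (by omega) (by omega)
    omega
  by_cases hneg : n ≤ j.val ∧ X j < 0 ∧ 0 < X i
  · obtain ⟨hjn, hj0, hi0⟩ := hneg
    have hb : X j.rev = - X j := hX j
    have hlt : j.rev < j := by rw [Fin.lt_def]; omega
    have hibr : X i ≤ X j.rev := by
      by_cases e : i = j.rev
      · rw [← e]
      · have : i.val ≠ j.rev.val := fun hc => e (Fin.ext hc)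
        refine h3 j.rev ?_ hlt ?_
        · rw [Fin.lt_def]; omega
        · omega
    have hstA : stepA X (X ∘ Equiv.swap j.rev j) := ⟨j.rev, j, hlt, by omega, rfl⟩
    have hs := stepA_cnt hstA
    refine ⟨X ∘ Equiv.swap j.rev j, ?_, ⟨?_, fun t => (hs.2 t).symm.trans (hD.2 t)⟩, ?_, hs.1,
      ⟨j.rev, ?_⟩, fun p => ⟨_, rfl⟩⟩
    · intro p
      simp only [Function.comp]
      rw [swap_rev, hX, Fin.rev_rev, Equiv.swap_comm]
    · intro k t
      have a1 := h4 k t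
      have a1' := h4' k t
      have a2 := hD.1 k t
      rw [cnt_swap_lt X _ _ hlt (by omega)]
      split_ifs <;> omega
    · right; right
      have hk : ∀ k : Fin n, Fin.castLE (by omega) k ≠ j := fun k hc => by
        have := congrArg Fin.val hc
        have := k.2
        simp at *
        omega
      refine ⟨⟨j.rev.val, by omega⟩, ?_, ?_⟩
      · change 0 < X j.rev
        omega
      · funext k
        by_cases hkb : k = ⟨j.rev.val, by omega⟩
        · subst hkb
          rw [Function.update_self]
          change X (Equiv.swap j.rev j j.rev) = - X j.rev
          rw [Equiv.swap_apply_left]; omega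
        · rw [Function.update_of_ne hkb]
          change X (Equiv.swap j.rev j (Fin.castLE _ k)) = X (Fin.castLE _ k)
          rw [Equiv.swap_apply_of_ne_of_ne _ (hk k)]
          intro hc
          have hv := congrArg Fin.val hc
          exact hkb (Fin.ext hv)
    · rw [cnt_swap_lt X _ _ hlt (by omega)]
      split_ifs <;> omega
  · have hnr : i ≠ j.rev := by
      intro e
      have := hX j
      rw [← e] at this
      have := congrArg Fin.val e
      omega
    have hii : i.rev ≠ i := fun hc => by
      have := congrArg Fin.val hc
      omega
    have hjj : j.rev ≠ j := fun hc => by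
      have := congrArg Fin.val hc
      omega
    have hji : j ≠ i.rev := fun hc => hnr (by rw [hc, Fin.rev_rev])
    set X1 := X ∘ Equiv.swap i j with hX1
    have hstA : stepA X X1 := ⟨i, j, hij, hXij, rfl⟩
    have hlt : j.rev < i.rev := by rw [Fin.lt_def]; omega
    have e1 : X1 j.rev = - X j := by
      rw [← hX, hX1, Function.comp, Equiv.swap_apply_of_ne_of_ne hnr.symm hjj]
    have e2 : X1 i.rev = - X i := by
      rw [← hX, hX1, Function.comp, Equiv.swap_apply_of_ne_of_ne hii hji.symm]
    have hstA2 : stepA X1 (X1 ∘ Equiv.swap j.rev i.rev) := ⟨j.rev, i.rev, hlt, by omega, rfl⟩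
    have hs := (stepA_cnt hstA).trans (stepA_cnt hstA2)
    refine ⟨X1 ∘ Equiv.swap j.rev i.rev, ?_, ⟨?_, fun t => (hs.2 t).symm.trans (hD.2 t)⟩, ?_, hs.1,
      ⟨i, ?_⟩, fun p => ⟨_, rfl⟩⟩
    · intro p
      simp only [hX1, Function.comp]
      rw [swap_rev, swap_rev, hX, Fin.rev_rev, Fin.rev_rev]
      congr 2
      have d1 : i ≠ j := hij.ne
      have d2 : i.rev ≠ j.rev := hlt.ne'
      simp only [Equiv.swap_apply_def]
      grind
    · intro k t
      have a1 := h4 k t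
      have a1' := h4' k t
      have a2 := hD.1 k t
      rw [cnt_swap_lt X1 _ _ hlt (by omega), e1, e2, cnt_swap_lt X _ _ hij hXij]
      split_ifs <;> omega
    · have hk : ∀ k : Fin n, Fin.castLE (by omega) k ≠ i.rev := fun k hc => by
        have := congrArg Fin.val hc
        have := k.2
        simp at *
        omega
      have hin : i.val < n := by omega
      by_cases hjn : j.val < n
      · left
        refine ⟨⟨i.val, hin⟩, ⟨j.val, hjn⟩, hij, hXij, ?_⟩
        funext k
        change X (Equiv.swap i j (Equiv.swap j.rev i.rev (Fin.castLE _ k))) =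
          X (Fin.castLE _ (Equiv.swap _ _ k))
        have hkj : Fin.castLE (by omega) k ≠ j.rev := fun hc => by
          have := congrArg Fin.val hc
          have := k.2
          simp at *
          omega
        rw [Equiv.swap_apply_of_ne_of_ne hkj (hk k)]
        exact congrArg X (Function.Injective.swap_apply (Fin.castLE_injective (show n ≤ 2 * n by omega))
          (⟨i.val, hin⟩ : Fin n) ⟨j.val, hjn⟩ k)
      · right; left
        have hkj : ∀ k : Fin n, Fin.castLE (by omega) k ≠ j := fun k hc => by
          have := congrArg Fin.val hc
          have := k.2
          simp at *
          omega
        have hnr' : i.val ≠ j.rev.val := fun hc => hnr (Fin.ext hc)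
        have hXj := hX j
        have hXi := hX i
        refine ⟨⟨i.val, hin⟩, ⟨j.rev.val, by omega⟩, ?_, ?_, ?_⟩
        · rw [Fin.lt_def]; simp only; omega
        · change 0 < X i + X j.rev
          omega
        · funext k
          change X (Equiv.swap i j (Equiv.swap j.rev i.rev (Fin.castLE _ k))) =
            if k = _ then - X j.rev else if k = _ then - X i else X (Fin.castLE _ k)
          split_ifs with c1 c2
          · subst c1
            change X (Equiv.swap i j (Equiv.swap j.rev i.rev i)) = _
            rw [Equiv.swap_apply_of_ne_of_ne hnr hii.symm, Equiv.swap_apply_left]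
            omega
          · subst c2
            change X (Equiv.swap i j (Equiv.swap j.rev i.rev j.rev)) = _
            rw [Equiv.swap_apply_left, Equiv.swap_apply_of_ne_of_ne hii hji.symm]
            omega
          · have hki : Fin.castLE (by omega) k ≠ i := fun hc => by
              have hv := congrArg Fin.val hc
              exact c1 (Fin.ext hv)
            have hkr : Fin.castLE (by omega) k ≠ j.rev := fun hc => by
              have hv := congrArg Fin.val hc
              exact c2 (Fin.ext hv)
            rw [Equiv.swap_apply_of_ne_of_ne hkr (hk k),
              Equiv.swap_apply_of_ne_of_ne hki (hkj k)]
    · rw [cnt_swap_lt X1 _ _ hlt (by omega), e1, e2, cnt_swap_lt X _ _ hij hXij]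
      split_ifs <;> omega

lemma dom_leC (n : ℕ) {X Y : Fin (2 * n) → ℤ} (hX : Anti X) (hY : Anti Y) (hD : Dom X Y) :
    leC (half n X) (half n Y) := by
  have h := dom_induct Y Anti (fun X X' => stepC (half n X) (half n X'))
    (fun X hX hD hne => anti_step n hY hX hD hne) X hX hD
  exact Relation.ReflTransGen.lift (half n) (fun _ _ h => h) _ _ h

/-- Antisymmetric extension. -/
def antiExt (n : ℕ) (x : Fin n → ℤ) : Fin (2 * n) → ℤ := fun p =>
  if h : p.val < n then x ⟨p.val, h⟩ else - x ⟨p.rev.val, by rw [Fin.val_rev]; omega⟩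

lemma antiExt_half (n : ℕ) {X : Fin (2 * n) → ℤ} (hX : Anti X) : antiExt n (half n X) = X := by
  funext p
  unfold antiExt
  split_ifs with h
  · rfl
  · change - X p.rev = X p
    rw [hX]; ring

lemma antiExt_anti (n : ℕ) (x : Fin n → ℤ) : Anti (antiExt n x) := by
  intro p
  have hp := p.2
  have := Fin.val_rev p
  unfold antiExt
  by_cases h : p.val < n
  · have h' : ¬ p.rev.val < n := by omega
    simp only [h, h', dite_true, dite_false, Fin.rev_rev]
  · have h' : p.rev.val < n := by omega
    simp only [h, h', dite_true, dite_false, neg_neg]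

lemma anti_eq (n : ℕ) {X Y : Fin (2 * n) → ℤ} (hX : Anti X) (hY : Anti Y)
    (h : half n X = half n Y) : X = Y := by
  rw [← antiExt_half n hX, ← antiExt_half n hY, h]

lemma anti_swap2 {N : ℕ} {X : Fin N → ℤ} (hX : Anti X) (i j : Fin N) (d1 : i ≠ j)
    (hnr : i ≠ j.rev) (hii : i.rev ≠ i) (hjj : j.rev ≠ j) :
    Anti ((X ∘ Equiv.swap i j) ∘ Equiv.swap j.rev i.rev) := by
  intro p
  have hji : j ≠ i.rev := fun hc => hnr (by rw [hc, Fin.rev_rev])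
  simp only [Function.comp]
  rw [swap_rev, swap_rev, hX, Fin.rev_rev, Fin.rev_rev]
  congr 2
  have d2 : i.rev ≠ j.rev := fun hc => d1 (Fin.rev_inj.mp hc)
  simp only [Equiv.swap_apply_def]
  grind

lemma stepC_dom (n : ℕ) {x y : Fin n → ℤ} (h : stepC x y) : Dom (antiExt n x) (antiExt n y) := by
  have hX := antiExt_anti n x
  have hY := antiExt_anti n y
  have h2n : n ≤ 2 * n := by omega
  have hx : ∀ k : Fin n, antiExt n x (Fin.castLE h2n k) = x k := by
    intro k
    simp [antiExt]
  have hy : ∀ k : Fin n, antiExt n y (Fin.castLE h2n k) = y k := by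
    intro k
    simp [antiExt]
  generalize antiExt n x = X at *
  generalize antiExt n y = Y at *
  have hinj : ∀ k l : Fin n, Fin.castLE h2n k = Fin.castLE h2n l ↔ k = l := fun k l =>
    (Fin.castLE_injective h2n).eq_iff
  have hnr : ∀ k l : Fin n, Fin.castLE h2n k < (Fin.castLE h2n l).rev := by
    intro k l
    rw [Fin.lt_def, Fin.val_rev]
    simp only [Fin.val_castLE]
    omega
  obtain ⟨a, b, hab, hlt, he⟩ | ⟨a, b, hab, hlt, he⟩ | ⟨a, hlt, he⟩ := h
  · have hab1 : Fin.castLE h2n a < Fin.castLE h2n b := hab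
    have e : Y = (X ∘ Equiv.swap (Fin.castLE h2n a) (Fin.castLE h2n b)) ∘
        Equiv.swap (Fin.castLE h2n b).rev (Fin.castLE h2n a).rev := by
      refine anti_eq n hY (anti_swap2 hX _ _ hab1.ne (hnr a b).ne (hnr a a).ne' (hnr b b).ne') ?_
      funext k
      change Y (Fin.castLE h2n k) = X (Equiv.swap _ _ (Equiv.swap _ _ (Fin.castLE h2n k)))
      rw [Equiv.swap_apply_of_ne_of_ne (hnr k b).ne (hnr k a).ne,
        Function.Injective.swap_apply (Fin.castLE_injective h2n), hx, hy, he]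
      rfl
    have s1 : stepA X (X ∘ Equiv.swap (Fin.castLE h2n a) (Fin.castLE h2n b)) :=
      ⟨_, _, hab1, by rw [hx, hx]; exact hlt, rfl⟩
    refine (stepA_cnt s1).trans (stepA_cnt ⟨_, _, Fin.rev_lt_rev.mpr hab1, ?_, e⟩)
    simp only [Function.comp]
    rw [Equiv.swap_apply_of_ne_of_ne (hnr a a).ne' (hnr b a).ne',
      Equiv.swap_apply_of_ne_of_ne (hnr a b).ne' (hnr b b).ne', hX, hX, hx, hx]
    omega
  · have hab1 : Fin.castLE h2n a < Fin.castLE h2n b := hab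
    have e : Y = (X ∘ Equiv.swap (Fin.castLE h2n a) (Fin.castLE h2n b).rev) ∘
        Equiv.swap (Fin.castLE h2n b).rev.rev (Fin.castLE h2n a).rev := by
      refine anti_eq n hY (anti_swap2 hX _ _ (hnr a b).ne (by rw [Fin.rev_rev]; exact hab1.ne)
        (hnr a a).ne' (by rw [Fin.rev_rev]; exact (hnr b b).ne)) ?_
      funext k
      change Y (Fin.castLE h2n k) = X (Equiv.swap _ _ (Equiv.swap _ _ (Fin.castLE h2n k)))
      rw [Fin.rev_rev, hy, he]
      simp only
      split_ifs with c1 c2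
      · subst c1
        rw [Equiv.swap_apply_of_ne_of_ne hab1.ne (hnr k k).ne, Equiv.swap_apply_left, hX, hx]
      · subst c2
        rw [Equiv.swap_apply_left, Equiv.swap_apply_of_ne_of_ne (hnr a a).ne'
          (fun hc => hab1.ne (Fin.rev_inj.mp hc)), hX, hx]
      · rw [Equiv.swap_apply_of_ne_of_ne (fun hc => c2 ((hinj _ _).mp hc)) (hnr k a).ne,
          Equiv.swap_apply_of_ne_of_ne (fun hc => c1 ((hinj _ _).mp hc)) (hnr k b).ne, hx]
    rw [Fin.rev_rev] at e
    have s1 : stepA X (X ∘ Equiv.swap (Fin.castLE h2n a) (Fin.castLE h2n b).rev) :=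
      ⟨_, _, hnr a b, by rw [hX, hx, hx]; omega, rfl⟩
    refine (stepA_cnt s1).trans (stepA_cnt ⟨_, _, hnr b a, ?_, e⟩)
    simp only [Function.comp]
    rw [Equiv.swap_apply_of_ne_of_ne (hnr a a).ne' (fun hc => hab1.ne (Fin.rev_inj.mp hc)),
      Equiv.swap_apply_of_ne_of_ne hab1.ne' (hnr b b).ne, hX, hx, hx]
    omega
  · have e : Y = X ∘ Equiv.swap (Fin.castLE h2n a) (Fin.castLE h2n a).rev := by
      refine anti_eq n hY ?_ ?_
      · intro p
        simp only [Function.comp]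
        rw [swap_rev, hX, Fin.rev_rev, Equiv.swap_comm]
      · funext k
        change Y (Fin.castLE h2n k) = X (Equiv.swap _ _ (Fin.castLE h2n k))
        rw [hy, he]
        by_cases c : k = a
        · subst c
          rw [Function.update_self, Equiv.swap_apply_left, hX, hx]
        · rw [Function.update_of_ne c, Equiv.swap_apply_of_ne_of_ne
            (fun hc => c ((hinj _ _).mp hc)) (hnr k a).ne, hx]
    exact stepA_cnt ⟨_, _, hnr a a, by rw [hX, hx]; omega, e⟩

lemma leC_dom (n : ℕ) {X Y : Fin (2 * n) → ℤ} (hX : Anti X) (hY : Anti Y)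
    (h : leC (half n X) (half n Y)) : Dom X Y := by
  rw [← antiExt_half n hX, ← antiExt_half n hY]
  generalize half n X = x at *
  generalize half n Y = y at *
  induction h with
  | refl => exact Dom.refl _
  | tail _ h ih => exact ih.trans (stepC_dom n h)

lemma leC_iff_dom (n : ℕ) {X Y : Fin (2 * n) → ℤ} (hX : Anti X) (hY : Anti Y) :
    leC (half n X) (half n Y) ↔ Dom X Y := ⟨leC_dom n hX hY, dom_leC n hX hY⟩

/-- Rank counts. -/
def rk {N : ℕ} (w : Equiv.Perm (Fin N)) (k m : ℕ) : ℤ :=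
  ∑ p : Fin N, if p.val < k ∧ (w.symm p).val < m then 1 else 0

/-- A break of a decreasing function. -/
def Brk {N : ℕ} (f : Fin N → ℤ) (m : ℕ) : Prop :=
  m ≤ N ∧ ∃ t, ∀ j : Fin N, t ≤ f j ↔ j.val < m

lemma cnt_eq_rk {N : ℕ} (f : Fin N → ℤ) (w : Equiv.Perm (Fin N)) (m : ℕ) (t : ℤ)
    (h : ∀ j : Fin N, t ≤ f j ↔ j.val < m) (k : ℕ) : cnt (permAct w f) k t = rk w k m := by
  simp only [cnt, rk, permAct, h]

lemma rk_total {N : ℕ} (w : Equiv.Perm (Fin N)) (m : ℕ) :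
    rk w N m = ∑ p : Fin N, if p.val < m then 1 else 0 := by
  unfold rk
  simp only [Fin.is_lt, true_and]
  exact Equiv.sum_comp w.symm (fun p : Fin N => if p.val < m then (1:ℤ) else 0)

lemma exists_brk {N : ℕ} (f : Fin N → ℤ) (hf : ∀ i j, i ≤ j → f j ≤ f i) (t : ℤ) :
    ∃ m ≤ N, ∀ j : Fin N, t ≤ f j ↔ j.val < m := by
  classical
  have hex : ∃ m : ℕ, ∀ j : Fin N, m ≤ j.val → f j < t := ⟨N, fun j hj => by omega⟩
  refine ⟨Nat.find hex, Nat.find_min' hex (fun j hj => by omega), fun j => ⟨fun h => ?_, fun h => ?_⟩⟩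
  · by_contra hc
    have := Nat.find_spec hex j (by omega)
    omega
  · have := Nat.find_min hex h
    push Not at this
    obtain ⟨q, hq, hq'⟩ := this
    exact hq'.trans (hf j q hq)

lemma dom_iff_rk {N : ℕ} (f : Fin N → ℤ) (hf : ∀ i j, i ≤ j → f j ≤ f i)
    (w v : Equiv.Perm (Fin N)) :
    Dom (permAct w f) (permAct v f) ↔ ∀ m, Brk f m → ∀ k, rk v k m ≤ rk w k m := by
  constructor
  · rintro h m ⟨hm, t, ht⟩ k
    rw [← cnt_eq_rk f v m t ht, ← cnt_eq_rk f w m t ht]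
    exact h.1 k t
  · intro h
    constructor
    · intro k t
      obtain ⟨m, hm, ht⟩ := exists_brk f hf t
      rw [cnt_eq_rk f v m t ht, cnt_eq_rk f w m t ht]
      exact h m ⟨hm, t, ht⟩ k
    · intro t
      obtain ⟨m, hm, ht⟩ := exists_brk f hf t
      rw [cnt_eq_rk f v m t ht, cnt_eq_rk f w m t ht, rk_total, rk_total]

lemma rk_trivial {N : ℕ} (w v : Equiv.Perm (Fin N)) (m : ℕ) (hm : m = 0 ∨ m = N) (k : ℕ) :
    rk v k m ≤ rk w k m := by
  rcases hm with rfl | rfl <;> simp [rk]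

lemma symm_rev (n : ℕ) {w : Equiv.Perm (Fin (2 * n))} (hw : InWhat n w) (p : Fin (2 * n)) :
    w.symm p.rev = (w.symm p).rev := by
  rw [Equiv.symm_apply_eq, hw, Equiv.apply_symm_apply]

lemma rk_rev (n : ℕ) {w : Equiv.Perm (Fin (2 * n))} (hw : InWhat n w) (k m : ℕ) (hk : k ≤ 2 * n)
    (hm : m ≤ 2 * n) : rk w k m + (∑ p : Fin (2 * n), if k ≤ p.val then 1 else 0) =
      rk w (2 * n - k) (2 * n - m) + rk w (2 * n) m := by
  have e : rk w (2 * n - k) (2 * n - m) = ∑ p : Fin (2 * n),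
      if p.rev.val < 2 * n - k ∧ (w.symm p.rev).val < 2 * n - m then 1 else 0 := by
    unfold rk
    exact (Equiv.sum_comp Fin.revPerm (fun p : Fin (2 * n) =>
      if p.val < 2 * n - k ∧ (w.symm p).val < 2 * n - m then (1:ℤ) else 0)).symm
  rw [e]
  unfold rk
  rw [← Finset.sum_add_distrib, ← Finset.sum_add_distrib]
  refine Finset.sum_congr rfl fun p _ => ?_
  have hp := p.2
  have hq := (w.symm p).2
  rw [symm_rev n hw, Fin.val_rev, Fin.val_rev]
  split_ifs <;> omega

lemma rk_ge {N : ℕ} (w : Equiv.Perm (Fin N)) (k m : ℕ) (hk : N ≤ k) : rk w k m = rk w N m := by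
  unfold rk
  refine Finset.sum_congr rfl fun p _ => ?_
  have := p.2
  have h1 : p.val < k := by omega
  simp [h1]

lemma rk_le_rev (n : ℕ) {w v : Equiv.Perm (Fin (2 * n))} (hw : InWhat n w) (hv : InWhat n v)
    (m : ℕ) (hm : m ≤ 2 * n) (h : ∀ k, rk v k (2 * n - m) ≤ rk w k (2 * n - m)) (k : ℕ) :
    rk v k m ≤ rk w k m := by
  by_cases hk : k ≤ 2 * n
  · have h1 := rk_rev n hw k m hk hm
    have h2 := rk_rev n hv k m hk hm
    have h3 := h (2 * n - k)
    rw [rk_total] at h1 h2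
    omega
  · rw [rk_ge v k m (by omega), rk_ge w k m (by omega), rk_total, rk_total]

lemma brk_iff {N : ℕ} (f : Fin N → ℤ) (hf : ∀ i j, i ≤ j → f j ≤ f i) (m : ℕ) (h0 : 0 < m)
    (hN : m < N) : Brk f m ↔ f ⟨m, hN⟩ < f ⟨m - 1, by omega⟩ := by
  constructor
  · rintro ⟨_, t, ht⟩
    have h1 := ht ⟨m, hN⟩
    have h2 := ht ⟨m - 1, by omega⟩
    simp only [lt_irrefl, iff_false] at h1
    have : m - 1 < m := by omega
    simp only [this, iff_true] at h2
    omega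
  · intro h
    refine ⟨hN.le, f ⟨m - 1, by omega⟩, fun j => ⟨fun hj => ?_, fun hj => ?_⟩⟩
    · by_contra hc
      have := hf ⟨m, hN⟩ j (by rw [Fin.le_def]; simp only; omega)
      omega
    · exact hf _ _ (by rw [Fin.le_def]; simp only; omega)

/-- For a weakly decreasing `λ ∈ ℤ^{2n}` and `μ₁, μ₂ ∈ Ŵλ`: `μ₁ ≤_s^A μ₂` iff
`π(μ₁) ≤_s^C π(μ₂)` (the strong orders of type `A_{2n−1}` and of the folded
type `C_n` correspond under the restriction map). -/
theorem leA_iff_leC_resMap (n : ℕ) (hn : 1 ≤ n)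
    (lam : Fin (2 * n) → ℤ) (hlam : ∀ i j : Fin (2 * n), i ≤ j → lam j ≤ lam i)
    (μ₁ μ₂ : Fin (2 * n) → ℤ)
    (h₁ : ∃ w : Equiv.Perm (Fin (2 * n)), InWhat n w ∧ μ₁ = permAct w lam)
    (h₂ : ∃ w : Equiv.Perm (Fin (2 * n)), InWhat n w ∧ μ₂ = permAct w lam) :
    leA μ₁ μ₂ ↔ leC (resMap n μ₁) (resMap n μ₂) := by
  obtain ⟨w, hw, rfl⟩ := h₁
  obtain ⟨v, hv, rfl⟩ := h₂
  set d : Fin (2 * n) → ℤ := fun p => lam p - lam p.rev with hd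
  have hdd : ∀ i j : Fin (2 * n), i ≤ j → d j ≤ d i := by
    intro i j hij
    have h1 := hlam i j hij
    have h2 := hlam j.rev i.rev (Fin.rev_le_rev.mpr hij)
    simp only [hd]
    omega
  have hA : Anti d := by
    intro p
    simp only [hd, Fin.rev_rev]; ring
  have hAw : ∀ u, InWhat n u → Anti (permAct u d) := by
    intro u hu p
    simp only [permAct]
    rw [symm_rev n hu, hA]
  have hres : ∀ u, InWhat n u → resMap n (permAct u lam) = half n (permAct u d) := by
    intro u hu
    funext k
    simp only [resMap, half, permAct, hd]
    rw [symm_rev n hu]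
  rw [hres w hw, hres v hv, leC_iff_dom n (hAw w hw) (hAw v hv), leA_iff_dom,
    dom_iff_rk lam hlam, dom_iff_rk d hdd]
  constructor
  · intro h m hm
    by_cases ht : m = 0 ∨ m = 2 * n
    · exact rk_trivial w v m ht
    push Not at ht
    have hmN := hm.1
    have h0 : 0 < m := by omega
    have hN : m < 2 * n := by omega
    rw [brk_iff d hdd m h0 hN] at hm
    by_cases hl : Brk lam m
    · exact h m hl
    · have hl' : Brk lam (2 * n - m) := by
        rw [brk_iff lam hlam m h0 hN] at hl
        rw [brk_iff lam hlam _ (by omega) (by omega)]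
        have e1 : (⟨m, hN⟩ : Fin (2 * n)).rev = ⟨2 * n - m - 1, by omega⟩ := by
          apply Fin.ext; rw [Fin.val_rev]; simp only; omega
        have e2 : (⟨m - 1, by omega⟩ : Fin (2 * n)).rev = ⟨2 * n - m, by omega⟩ := by
          apply Fin.ext; rw [Fin.val_rev]; simp only; omega
        simp only [hd] at hm
        rw [e1, e2] at hm
        omega
      exact rk_le_rev n hw hv m hmN (h _ hl')
  · intro h m hm
    by_cases ht : m = 0 ∨ m = 2 * n
    · exact rk_trivial w v m ht
    push Not at ht
    have hmN := hm.1
    have h0 : 0 < m := by omega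
    have hN : m < 2 * n := by omega
    refine h m ?_
    rw [brk_iff lam hlam m h0 hN] at hm
    rw [brk_iff d hdd m h0 hN]
    have h2 := hlam (⟨m, hN⟩ : Fin (2 * n)).rev (⟨m - 1, by omega⟩ : Fin (2 * n)).rev
      (Fin.rev_le_rev.mpr (by rw [Fin.le_def]; simp only; omega))
    simp only [hd]
    omega
end

section
/- Fix integers n, m with 1 ≤ m ≤ n, let P := Y_{m,n−m+1} be the rectangular Young diagram poset, and let κ : P → {1,…,n}, κ((i,j)) := j − i + m, be its I-coloring. Then for all k, l ∈ {1,…,n} with |k − l| ≥ 2 and every order filter F of P, S_k(S_l(F)) = S_l(S_k(F)). -/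
/-- The rectangular Young diagram poset `Y_{m,N}` (cells `(i,j)`, `1 ≤ i ≤ m`,
`1 ≤ j ≤ N`, with `(i₁,j₁) ≤ (i₂,j₂)` iff `i₁ ≥ i₂` and `j₁ ≥ j₂`), realized as the
product of two dual finite chains. -/
abbrev YD (m N : ℕ) := (Fin m)ᵒᵈ × (Fin N)ᵒᵈ

/-- The `I`-coloring of `Y_{m, n−m+1}` for type `A_n`: `κ((i,j)) = j − i + m`
(in 1-indexed coordinates), with values in `{1,…,n}`. -/
def ykappa (m N : ℕ) (x : YD m N) : ℤ :=
  ((OrderDual.ofDual x.2 : Fin N) : ℤ) - ((OrderDual.ofDual x.1 : Fin m) : ℤ) + m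

theorem mem_Aop {α C : Type*} [PartialOrder α] (κ : α → C) (c : C) (F : Set α) (x : α) :
    x ∈ Aop κ c F ↔ ∀ y, x ≤ y → y ∈ F ∨ κ y = c := by
  constructor
  · rintro ⟨F', ⟨hf, hs⟩, hx⟩ y hy
    by_cases h : y ∈ F
    · exact Or.inl h
    · exact Or.inr (hs ⟨hf hx hy, h⟩)
  · intro h
    refine ⟨Set.Ici x, ⟨fun a b ha hab => le_trans ha hab, ?_⟩, le_refl x⟩
    rintro y ⟨hy, hyF⟩
    exact (h y hy).resolve_left hyF

theorem mem_Rop {α C : Type*} [PartialOrder α] (κ : α → C) (c : C) (F : Set α) (x : α) :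
    x ∈ Rop κ c F ↔ ∃ y, y ≤ x ∧ y ∈ F ∧ κ y ≠ c := by
  constructor
  · intro h
    by_contra hn
    push Not at hn
    have := h (Set.Iic x)ᶜ ⟨fun a b ha hab hb => ha (le_trans hab hb), ?_⟩
    · exact this (le_refl x)
    · rintro y ⟨hy, hyF⟩
      exact hn y (not_not.mp hyF) hy
  · rintro ⟨y, hyx, hyF, hc⟩ F' ⟨hf, hs⟩
    by_contra hx
    exact hc (hs ⟨hyF, fun hy => hx (hf hy hyx)⟩)

theorem Sop_spec {α : Type*} [PartialOrder α] (κ : α → ℤ)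
    (up : ∀ x y : α, x < y → ∃ z, x < z ∧ z ≤ y ∧ |κ z - κ x| = 1)
    (dn : ∀ x y : α, x < y → ∃ z, x ≤ z ∧ z < y ∧ |κ z - κ y| = 1)
    (c : ℤ) (F : Set α) (hF : IsOrderFilter F) :
    IsOrderFilter (Sop κ c F) ∧ (∀ x, κ x ≠ c → (x ∈ Sop κ c F ↔ x ∈ F)) ∧
    (∀ x, κ x = c → (x ∈ Sop κ c F ↔
      (x ∉ F ∧ ∀ y, x < y → |κ y - c| = 1 → y ∈ F) ∨
      (x ∈ F ∧ ∃ y, y < x ∧ |κ y - c| = 1 ∧ y ∈ F))) := by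
  have ne1 : ∀ a : ℤ, |a - c| = 1 → a ≠ c := by
    rintro a h rfl
    simp at h
  have hT : IsOrderFilter ((Aop κ c F \ F) ∪ Rop κ c F) := by
    rintro x y (⟨hA, hxF⟩ | hR) hxy
    · rw [mem_Aop] at hA
      by_cases hy : y ∈ F
      · right
        rw [mem_Rop]
        by_cases hc : κ y = c
        · have hlt : x < y := lt_of_le_of_ne hxy (by rintro rfl; exact hxF hy)
          obtain ⟨z, h1, h2, h3⟩ := dn x y hlt
          rw [hc] at h3
          exact ⟨z, h2.le, (hA z h1).resolve_right (ne1 _ h3), ne1 _ h3⟩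
        · exact ⟨y, le_refl y, hy, hc⟩
      · left
        refine ⟨?_, hy⟩
        rw [mem_Aop]
        exact fun z hz => hA z (hxy.trans hz)
    · right
      rw [mem_Rop] at hR ⊢
      obtain ⟨z, h1, h2⟩ := hR
      exact ⟨z, h1.trans hxy, h2⟩
  have hS : Sop κ c F = (Aop κ c F \ F) ∪ Rop κ c F := by
    unfold Sop
    rw [if_pos hT]
  rw [hS]
  refine ⟨hT, ?_, ?_⟩
  · intro x hx
    rw [Set.mem_union, Set.mem_sdiff, mem_Aop, mem_Rop]
    constructor
    · rintro (⟨h, _⟩ | ⟨y, h1, h2, _⟩)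
      · exact (h x (le_refl x)).resolve_right hx
      · exact hF h2 h1
    · exact fun h => Or.inr ⟨x, le_refl x, h, hx⟩
  · intro x hx
    rw [Set.mem_union, Set.mem_sdiff, mem_Aop, mem_Rop]
    constructor
    · rintro (⟨h, h'⟩ | ⟨y, h1, h2, h3⟩)
      · exact Or.inl ⟨h', fun y hy hc => (h y hy.le).resolve_right (ne1 _ hc)⟩
      · refine Or.inr ⟨hF h2 h1, ?_⟩
        have hlt : y < x := lt_of_le_of_ne h1 (by rintro rfl; exact h3 hx)
        obtain ⟨z, a, b, d⟩ := dn y x hlt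
        rw [hx] at d
        exact ⟨z, b, d, hF h2 a⟩
    · rintro (⟨h, h'⟩ | ⟨h, y, h1, h2, h3⟩)
      · refine Or.inl ⟨fun y hy => ?_, h⟩
        rcases hy.eq_or_lt with rfl | hlt
        · exact Or.inr hx
        · obtain ⟨z, a, b, d⟩ := up x y hlt
          rw [hx] at d
          exact Or.inl (hF (h' z a d) b)
      · exact Or.inr ⟨y, h1.le, h3, ne1 _ h2⟩

theorem Sop_comm_aux {α : Type*} [PartialOrder α] (κ : α → ℤ)
    (up : ∀ x y : α, x < y → ∃ z, x < z ∧ z ≤ y ∧ |κ z - κ x| = 1)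
    (dn : ∀ x y : α, x < y → ∃ z, x ≤ z ∧ z < y ∧ |κ z - κ y| = 1)
    (k l : ℤ) (hkl : 2 ≤ |k - l|) (F : Set α) (hF : IsOrderFilter F) (x : α)
    (hx : κ x = k) :
    (x ∈ Sop κ k (Sop κ l F) ↔ x ∈ Sop κ l (Sop κ k F)) := by
  obtain ⟨l1, l2, l3⟩ := Sop_spec κ up dn l F hF
  obtain ⟨k1, k2, k3⟩ := Sop_spec κ up dn k F hF
  have hne : κ x ≠ l := by
    intro h
    rw [← hx, h] at hkl
    simp at hkl
  have key : ∀ y, |κ y - k| = 1 → (y ∈ Sop κ l F ↔ y ∈ F) := by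
    intro y hy
    apply l2
    rintro h
    rw [h, abs_sub_comm] at hy
    omega
  rw [(Sop_spec κ up dn l _ k1).2.1 x hne, (Sop_spec κ up dn k _ l1).2.2 x hx, k3 x hx,
    l2 x hne]
  have e1 : (∀ y, x < y → |κ y - k| = 1 → y ∈ Sop κ l F) ↔
      (∀ y, x < y → |κ y - k| = 1 → y ∈ F) :=
    forall_congr' fun y => forall_congr' fun _ => forall_congr' fun h => key y h
  have e2 : (∃ y, y < x ∧ |κ y - k| = 1 ∧ y ∈ Sop κ l F) ↔
      (∃ y, y < x ∧ |κ y - k| = 1 ∧ y ∈ F) :=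
    exists_congr fun y => and_congr_right fun _ => and_congr_right fun h => key y h
  rw [e1, e2]

theorem YD_le {m N : ℕ} (a c : Fin m) (b d : Fin N) :
    ((OrderDual.toDual a, OrderDual.toDual b) : YD m N) ≤
      (OrderDual.toDual c, OrderDual.toDual d) ↔ c.val ≤ a.val ∧ d.val ≤ b.val := Iff.rfl

theorem YD_lt {m N : ℕ} (a c : Fin m) (b d : Fin N) :
    ((OrderDual.toDual a, OrderDual.toDual b) : YD m N) <
      (OrderDual.toDual c, OrderDual.toDual d) ↔
      (c.val ≤ a.val ∧ d.val ≤ b.val) ∧ ¬ (a.val ≤ c.val ∧ b.val ≤ d.val) := by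
  rw [lt_iff_le_not_ge, YD_le, YD_le]

theorem yk_mk {m N : ℕ} (a : Fin m) (b : Fin N) :
    ykappa m N (OrderDual.toDual a, OrderDual.toDual b) = (b.val : ℤ) - a.val + m := rfl

theorem YD_up (m N : ℕ) (x y : YD m N) (h : x < y) :
    ∃ z, x < z ∧ z ≤ y ∧ |ykappa m N z - ykappa m N x| = 1 := by
  obtain ⟨a, b⟩ := x
  obtain ⟨c, d⟩ := y
  induction a using OrderDual.rec with | _ a
  induction b using OrderDual.rec with | _ b
  induction c using OrderDual.rec with | _ c
  induction d using OrderDual.rec with | _ d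
  rw [YD_lt] at h
  have ha := a.isLt
  have hb := b.isLt
  by_cases h1 : c.val < a.val
  · refine ⟨(OrderDual.toDual ⟨a.val - 1, by omega⟩, OrderDual.toDual b), ?_, ?_, ?_⟩
    · rw [YD_lt]; dsimp only; omega
    · rw [YD_le]; dsimp only; omega
    · rw [yk_mk, yk_mk, abs_eq (by norm_num)]; dsimp only; omega
  · refine ⟨(OrderDual.toDual a, OrderDual.toDual ⟨b.val - 1, by omega⟩), ?_, ?_, ?_⟩
    · rw [YD_lt]; dsimp only; omega
    · rw [YD_le]; dsimp only; omega
    · rw [yk_mk, yk_mk, abs_eq (by norm_num)]; dsimp only; omega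

theorem YD_dn (m N : ℕ) (x y : YD m N) (h : x < y) :
    ∃ z, x ≤ z ∧ z < y ∧ |ykappa m N z - ykappa m N y| = 1 := by
  obtain ⟨a, b⟩ := x
  obtain ⟨c, d⟩ := y
  induction a using OrderDual.rec with | _ a
  induction b using OrderDual.rec with | _ b
  induction c using OrderDual.rec with | _ c
  induction d using OrderDual.rec with | _ d
  rw [YD_lt] at h
  have ha := a.isLt
  have hb := b.isLt
  by_cases h1 : c.val < a.val
  · refine ⟨(OrderDual.toDual ⟨c.val + 1, by omega⟩, OrderDual.toDual d), ?_, ?_, ?_⟩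
    · rw [YD_le]; dsimp only; omega
    · rw [YD_lt]; dsimp only; omega
    · rw [yk_mk, yk_mk, abs_eq (by norm_num)]; dsimp only; omega
  · refine ⟨(OrderDual.toDual c, OrderDual.toDual ⟨d.val + 1, by omega⟩), ?_, ?_, ?_⟩
    · rw [YD_le]; dsimp only; omega
    · rw [YD_lt]; dsimp only; omega
    · rw [yk_mk, yk_mk, abs_eq (by norm_num)]; dsimp only; omega

/-- Commutation relation: for colors `k, l ∈ {1,…,n}` with `|k − l| ≥ 2` and any order
filter `F` of `Y_{m,n−m+1}`, `S_k(S_l(F)) = S_l(S_k(F))`. -/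
theorem Sop_comm (n m : ℕ) (hm : 1 ≤ m) (hmn : m ≤ n)
    (k l : ℤ) (hk1 : 1 ≤ k) (hkn : k ≤ n) (hl1 : 1 ≤ l) (hln : l ≤ n)
    (hkl : 2 ≤ |k - l|)
    (F : Set (YD m (n - m + 1))) (hF : IsOrderFilter F) :
    Sop (ykappa m (n - m + 1)) k (Sop (ykappa m (n - m + 1)) l F) =
      Sop (ykappa m (n - m + 1)) l (Sop (ykappa m (n - m + 1)) k F) := by
  have up := YD_up m (n - m + 1)
  have dn := YD_dn m (n - m + 1)
  ext x
  by_cases hx : ykappa m (n - m + 1) x = k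
  · exact Sop_comm_aux _ up dn k l hkl F hF x hx
  by_cases hx' : ykappa m (n - m + 1) x = l
  · rw [abs_sub_comm] at hkl
    exact (Sop_comm_aux _ up dn l k hkl F hF x hx').symm
  obtain ⟨l1, l2, _⟩ := Sop_spec _ up dn l F hF
  obtain ⟨k1, k2, _⟩ := Sop_spec _ up dn k F hF
  rw [(Sop_spec _ up dn k _ l1).2.1 x hx, (Sop_spec _ up dn l _ k1).2.1 x hx', l2 x hx', k2 x hx]
end

section
/- Fix integers n, m with 1 ≤ m ≤ n and let P := Y_{m,n−m+1} with I-coloring κ((i,j)) := j − i + m and J-coloring κ̃((i,j)) := the orbit of κ((i,j)) under k ↦ n+1−k. Let k be an integer with 1 ≤ k and k + 2 ≤ n+1−k, and set p := {k, n+1−k} ∈ J (a two-element orbit satisfying the orthogonality condition). Then for every order filter F of P, S̃_p(F) = S_k(S_{n+1−k}(F)) = S_{n+1−k}(S_k(F)). -/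
/-- The `J`-coloring of `Y_{m, n−m+1}`: the orbit of the color `κ((i,j)) = j − i + m`
under the Dynkin diagram involution `k ↦ n+1−k`, encoded by its minimal element, i.e.
`κ̃((i,j)) = min{ j−i+m , i−j+n−m+1 }`. -/
def ytkappa (n m N : ℕ) (x : YD m N) : ℤ :=
  min (ykappa m N x) ((n : ℤ) + 1 - ykappa m N x)

/-- Between two comparable distinct elements of `D` lies an element outside `D`. -/
def SepSet {α : Type*} [PartialOrder α] (D : Set α) : Prop :=
  ∀ ⦃x y : α⦄, x ∈ D → y ∈ D → x < y → ∃ z, z ∉ D ∧ x < z ∧ z < y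

/-- Simultaneous toggle at all elements of `D`. -/
def Tog {α : Type*} [PartialOrder α] (D F : Set α) : Set α :=
  {x | (x ∉ F ∧ x ∈ D ∧ ∀ y, x < y → y ∈ F) ∨ (x ∈ F ∧ ¬ (x ∈ D ∧ ∀ y, y < x → y ∉ F))}

theorem SepSet.sub {α : Type*} [PartialOrder α] {D E : Set α} (h : SepSet D) (hE : E ⊆ D) :
    SepSet E := by
  intro x y hx hy hxy
  obtain ⟨z, hz, h1, h2⟩ := h (hE hx) (hE hy) hxy
  exact ⟨z, fun h => hz (hE h), h1, h2⟩

theorem Tog_filter {α : Type*} [PartialOrder α] {D F : Set α} (hD : SepSet D)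
    (hF : IsOrderFilter F) : IsOrderFilter (Tog D F) := by
  intro x y hx hxy
  rcases hxy.eq_or_lt with rfl | hlt
  · exact hx
  rcases hx with ⟨_, hxD, hup⟩ | ⟨hxF, _⟩
  · refine Or.inr ⟨hup y hlt, ?_⟩
    rintro ⟨hyD, hdown⟩
    obtain ⟨z, _, h1, h2⟩ := hD hxD hyD hlt
    exact hdown z h2 (hup z h1)
  · exact Or.inr ⟨hF hxF hxy, fun h => h.2 x hlt hxF⟩

theorem Sop_eq_Tog {α C : Type*} [PartialOrder α] (κ : α → C) (c : C) {F : Set α}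
    (hD : SepSet (κ ⁻¹' {c})) (hF : IsOrderFilter F) : Sop κ c F = Tog (κ ⁻¹' {c}) F := by
  have key : (Aop κ c F \ F) ∪ Rop κ c F = Tog (κ ⁻¹' {c}) F := by
    ext x
    constructor
    · rintro (⟨⟨F', ⟨hF', hsub⟩, hx⟩, hxF⟩ | hx)
      · refine Or.inl ⟨hxF, hsub ⟨hx, hxF⟩, fun y hy => ?_⟩
        by_contra hyF
        obtain ⟨z, hz, h1, h2⟩ := hD (hsub ⟨hx, hxF⟩) (hsub ⟨hF' hx hy.le, hyF⟩) hy
        by_cases hzF : z ∈ F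
        · exact hyF (hF hzF h2.le)
        · exact hz (hsub ⟨hF' hx h1.le, hzF⟩)
      · refine Or.inr ⟨hx F ⟨hF, fun y hy => absurd hy.1 hy.2⟩, ?_⟩
        rintro ⟨hxD, hdown⟩
        have : x ∈ F \ {x} := by
          refine hx (F \ {x}) ⟨?_, ?_⟩
          · rintro a b ⟨ha, hax⟩ hab
            refine ⟨hF ha hab, ?_⟩
            rintro rfl
            exact hdown a (lt_of_le_of_ne hab hax) ha
          · rintro y ⟨hy, hy'⟩
            have : y = x := by
              by_contra hne
              exact hy' ⟨hy, hne⟩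
            rw [this]; exact hxD
        exact this.2 rfl
    · rintro (⟨hxF, hxD, hup⟩ | ⟨hxF, hn⟩)
      · refine Or.inl ⟨⟨F ∪ {x}, ⟨?_, ?_⟩, Or.inr rfl⟩, hxF⟩
        · rintro a b (ha | ha) hab
          · exact Or.inl (hF ha hab)
          · rw [Set.mem_singleton_iff] at ha
            subst ha
            rcases hab.eq_or_lt with rfl | hlt
            · exact Or.inr rfl
            · exact Or.inl (hup b hlt)
        · rintro y ⟨hy | hy, hy'⟩
          · exact absurd hy hy'
          · rw [Set.mem_singleton_iff] at hy
            rw [hy]; exact hxD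
      · refine Or.inr ?_
        rintro F' ⟨hF', hsub⟩
        by_contra hx'
        have hxD := hsub ⟨hxF, hx'⟩
        refine hn ⟨hxD, fun y hy hyF => ?_⟩
        obtain ⟨z, hz, h1, h2⟩ := hD (hsub ⟨hyF, fun h => hx' (hF' h hy.le)⟩) hxD hy
        exact hz (hsub ⟨hF hyF h1.le, fun h => hx' (hF' h h2.le)⟩)
  unfold Sop
  rw [key, if_pos (Tog_filter hD hF)]

theorem Tog_union {α : Type*} [PartialOrder α] {D E F : Set α} (hD : SepSet (D ∪ E))
    (hdis : ∀ x, x ∈ D → x ∉ E) (hF : IsOrderFilter F) :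
    Tog (D ∪ E) F = Tog D (Tog E F) := by
  have hG : ∀ x, x ∉ E → (x ∈ Tog E F ↔ x ∈ F) := by
    intro x hx
    simp [Tog, hx]
  ext x
  by_cases hx : x ∈ D
  · have hxE := hdis x hx
    have h1 : (∀ y, x < y → y ∈ Tog E F) ↔ (∀ y, x < y → y ∈ F) := by
      constructor
      · intro h y hy
        by_cases hyE : y ∈ E
        · obtain ⟨z, hz, h1, h2⟩ := hD (Or.inl hx) (Or.inr hyE) hy
          exact hF ((hG z fun h => hz (Or.inr h)).1 (h z h1)) h2.le
        · exact (hG y hyE).1 (h y hy)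
      · intro h y hy
        refine Or.inr ⟨h y hy, ?_⟩
        rintro ⟨hyE, hdown⟩
        obtain ⟨z, hz, h1, h2⟩ := hD (Or.inl hx) (Or.inr hyE) hy
        exact hdown z h2 (h z h1)
    have h2 : (∀ y, y < x → y ∉ Tog E F) ↔ (∀ y, y < x → y ∉ F) := by
      constructor
      · intro h y hy hyF
        by_cases hyE : y ∈ E
        · obtain ⟨z, hz, h1, h2⟩ := hD (Or.inr hyE) (Or.inl hx) hy
          exact h z h2 ((hG z fun h => hz (Or.inr h)).2 (hF hyF h1.le))
        · exact h y hy ((hG y hyE).2 hyF)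
      · rintro h y hy (⟨_, hyE, hup⟩ | ⟨hyF, _⟩)
        · obtain ⟨z, hz, h1, h2⟩ := hD (Or.inr hyE) (Or.inl hx) hy
          exact h z h2 (hup z h1)
        · exact h y hy hyF
    change (_ ∨ _) ↔ (_ ∨ _)
    rw [h1, h2, hG x hxE]
    simp [hx]
  · have : x ∈ Tog D (Tog E F) ↔ x ∈ Tog E F := by
      generalize Tog E F = G
      simp [Tog, hx]
    rw [this]
    simp [Tog, hx]

theorem yd_between {m N : ℕ} {x y : YD m N} (hxy : x < y) :
    (ykappa m N x ≤ ykappa m N y → ∃ z, x ≤ z ∧ z ≤ y ∧ ykappa m N z = ykappa m N x + 1) ∧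
    (ykappa m N y < ykappa m N x → ∃ z, x ≤ z ∧ z ≤ y ∧ ykappa m N z = ykappa m N x - 1) := by
  obtain ⟨i, j⟩ := x
  obtain ⟨i', j'⟩ := y
  induction i using OrderDual.rec with | _ i
  induction j using OrderDual.rec with | _ j
  induction i' using OrderDual.rec with | _ i'
  induction j' using OrderDual.rec with | _ j'
  obtain ⟨i, hi⟩ := i
  obtain ⟨j, hj⟩ := j
  obtain ⟨i', hi'⟩ := i'
  obtain ⟨j', hj'⟩ := j'
  have hle := hxy.le
  have hne := hxy.ne
  simp only [Prod.mk_le_mk, OrderDual.toDual_le_toDual, Fin.mk_le_mk] at hle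
  simp only [ne_eq, Prod.mk.injEq, OrderDual.toDual_inj, Fin.mk.injEq] at hne
  simp only [ykappa, OrderDual.ofDual_toDual]
  constructor
  · intro h
    refine ⟨(OrderDual.toDual ⟨i - 1, by omega⟩, OrderDual.toDual ⟨j, hj⟩), ?_, ?_, ?_⟩
    · simp only [Prod.mk_le_mk, OrderDual.toDual_le_toDual, Fin.mk_le_mk]; omega
    · simp only [Prod.mk_le_mk, OrderDual.toDual_le_toDual, Fin.mk_le_mk]; omega
    · simp only [OrderDual.ofDual_toDual]; omega
  · intro h
    refine ⟨(OrderDual.toDual ⟨i, hi⟩, OrderDual.toDual ⟨j - 1, by omega⟩), ?_, ?_, ?_⟩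
    · simp only [Prod.mk_le_mk, OrderDual.toDual_le_toDual, Fin.mk_le_mk]; omega
    · simp only [Prod.mk_le_mk, OrderDual.toDual_le_toDual, Fin.mk_le_mk]; omega
    · simp only [OrderDual.ofDual_toDual]; omega

theorem yd_sep (m N : ℕ) (a b : ℤ) (hab : a + 2 ≤ b) :
    SepSet (ykappa m N ⁻¹' {a} ∪ ykappa m N ⁻¹' {b}) := by
  intro x y hx hy hxy
  obtain ⟨h1, h2⟩ := yd_between hxy
  have aux : ∀ z, x ≤ z → z ≤ y → z ∉ (ykappa m N ⁻¹' {a} ∪ ykappa m N ⁻¹' {b}) →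
      ∃ z, z ∉ (ykappa m N ⁻¹' {a} ∪ ykappa m N ⁻¹' {b}) ∧ x < z ∧ z < y := by
    intro z hxz hzy hz
    refine ⟨z, hz, lt_of_le_of_ne hxz ?_, lt_of_le_of_ne hzy ?_⟩
    · rintro rfl; exact hz hx
    · rintro rfl; exact hz hy
  simp only [Set.mem_union, Set.mem_preimage, Set.mem_singleton_iff] at hx hy
  by_cases h : ykappa m N x ≤ ykappa m N y
  · obtain ⟨z, hxz, hzy, hz⟩ := h1 h
    refine aux z hxz hzy ?_
    simp only [Set.mem_union, Set.mem_preimage, Set.mem_singleton_iff]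
    omega
  · obtain ⟨z, hxz, hzy, hz⟩ := h2 (not_le.1 h)
    refine aux z hxz hzy ?_
    simp only [Set.mem_union, Set.mem_preimage, Set.mem_singleton_iff]
    omega

/-- For a two-element orbit `p = {k, n+1−k}` (with `1 ≤ k` and `k+2 ≤ n+1−k`, so `p`
satisfies the orthogonality condition), the folded operator `S̃_p` on order filters of
`Y_{m,n−m+1}` equals `S_k ∘ S_{n+1−k} = S_{n+1−k} ∘ S_k`.  Here `S̃_p` is the operator
for the `J`-coloring `κ̃` at the orbit `p` (encoded by its minimum `k`). -/
theorem Sop_fold_orth (n m : ℕ) (hm : 1 ≤ m) (hmn : m ≤ n)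
    (k : ℤ) (hk1 : 1 ≤ k) (hk2 : k + 2 ≤ (n : ℤ) + 1 - k)
    (F : Set (YD m (n - m + 1))) (hF : IsOrderFilter F) :
    Sop (ytkappa n m (n - m + 1)) k F =
        Sop (ykappa m (n - m + 1)) k (Sop (ykappa m (n - m + 1)) ((n : ℤ) + 1 - k) F) ∧
      Sop (ytkappa n m (n - m + 1)) k F =
        Sop (ykappa m (n - m + 1)) ((n : ℤ) + 1 - k) (Sop (ykappa m (n - m + 1)) k F) := by
  have hsep := yd_sep m (n - m + 1) k ((n : ℤ) + 1 - k) hk2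
  have hpre : ytkappa n m (n - m + 1) ⁻¹' {k} = ykappa m (n - m + 1) ⁻¹' {k} ∪
      ykappa m (n - m + 1) ⁻¹' {(n : ℤ) + 1 - k} := by
    ext x
    simp only [ytkappa, Set.mem_union, Set.mem_preimage, Set.mem_singleton_iff]
    omega
  have hs1 := hsep.sub Set.subset_union_left
  have hs2 := hsep.sub Set.subset_union_right
  have hdis : ∀ x, x ∈ ykappa m (n - m + 1) ⁻¹' {k} →
      x ∉ ykappa m (n - m + 1) ⁻¹' {(n : ℤ) + 1 - k} := by
    intro x
    simp only [Set.mem_preimage, Set.mem_singleton_iff]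
    omega
  rw [Sop_eq_Tog (ytkappa n m (n - m + 1)) k (hpre ▸ hsep) hF, hpre,
    Sop_eq_Tog _ _ hs1 hF, Sop_eq_Tog _ _ hs2 hF,
    Sop_eq_Tog _ _ hs1 (Tog_filter hs2 hF), Sop_eq_Tog _ _ hs2 (Tog_filter hs1 hF)]
  refine ⟨Tog_union hsep hdis hF, ?_⟩
  rw [Set.union_comm] at hsep ⊢
  exact Tog_union hsep (fun x h1 h2 => hdis x h2 h1) hF
end

section
/- Fix integers n, m with 1 ≤ m ≤ (n+1)/2, let P := Y_{m,n−m+1} with I-coloring κ((i,j)) := j − i + m, and let Y be an order filter of P and k ∈ {1,…,n}. Then k ∉ 𝓘(Y) and k+1 ∈ 𝓘(Y) if and only if S_k(Y) ⊊ Y. -/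
/-- The length `𝐤_i` of row `i` of a subset `Y` of `Y_{m,N}`:
the number of cells of `Y` in row `i`. -/
noncomputable def rowLen (m N : ℕ) (Y : Set (YD m N)) (i : Fin m) : ℕ :=
  Set.ncard {j : Fin N | (OrderDual.toDual i, OrderDual.toDual j) ∈ Y}

/-- `𝓘(Y) := {𝐤_i + m + 1 − i : 1 ≤ i ≤ m} ⊆ {1,…,n+1}` (here the row index `i`
is 0-indexed, so the element for row `i` is `𝐤_i + m − i`). -/
def ISet (m N : ℕ) (Y : Set (YD m N)) : Set ℤ :=
  {z : ℤ | ∃ i : Fin m, z = (rowLen m N Y i : ℤ) + m - (i : ℤ)}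

theorem mem_iff_rowLen {m N : ℕ} {Y : Set (YD m N)} (hY : IsOrderFilter Y) (i : Fin m) (j : Fin N) :
    ((OrderDual.toDual i, OrderDual.toDual j) : YD m N) ∈ Y ↔ (j : ℕ) < rowLen m N Y i := by
  unfold rowLen
  constructor
  · intro h
    have hs : Set.Iic j ⊆ {j : Fin N | ((OrderDual.toDual i, OrderDual.toDual j) : YD m N) ∈ Y} := by
      intro a ha
      exact hY h ⟨le_refl _, ha⟩
    have := Set.ncard_le_ncard hs (Set.toFinite _)
    rw [← Finset.coe_Iic, Set.ncard_coe_finset, Fin.card_Iic] at this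
    omega
  · intro h
    by_contra hc
    have hs : {j : Fin N | ((OrderDual.toDual i, OrderDual.toDual j) : YD m N) ∈ Y} ⊆ Set.Iio j := by
      intro a ha
      by_contra hb
      exact hc (hY ha ⟨le_refl _, not_lt.mp hb⟩)
    have := Set.ncard_le_ncard hs (Set.toFinite _)
    rw [← Finset.coe_Iio, Set.ncard_coe_finset, Fin.card_Iio] at this
    omega

theorem rowLen_le_of_filter {m N : ℕ} {Y : Set (YD m N)} (hY : IsOrderFilter Y) {i i' : Fin m}
    (h : i ≤ i') : rowLen m N Y i' ≤ rowLen m N Y i := by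
  unfold rowLen
  apply Set.ncard_le_ncard _ (Set.toFinite _)
  intro a ha
  exact hY ha ⟨h, le_refl _⟩

theorem rowLen_le_width {m N : ℕ} (Y : Set (YD m N)) (i : Fin m) : rowLen m N Y i ≤ N := by
  unfold rowLen
  have := Set.ncard_le_card {j : Fin N | ((OrderDual.toDual i, OrderDual.toDual j) : YD m N) ∈ Y}
  simpa using this

theorem ISet_iff_aux (m N : ℕ) (Y : Set (YD m N)) (hY : IsOrderFilter Y) (k : ℤ) (hk1 : 1 ≤ k) :
    (k ∉ ISet m N Y ∧ k + 1 ∈ ISet m N Y) ↔ Sop (ykappa m N) k Y ⊂ Y := by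
  have hRY : Rop (ykappa m N) k Y ⊆ Y := Set.sInter_subset_of_mem ⟨hY, by simp⟩
  constructor
  · rintro ⟨hk, i, hi⟩
    have hstep : ∀ i' : Fin m, (i' : ℕ) = i + 1 → rowLen m N Y i' < rowLen m N Y i := by
      intro i' hi'
      have h1 := rowLen_le_of_filter hY (i := i) (i' := i') (Fin.le_def.mpr (by omega))
      by_contra h2
      exact hk ⟨i', by omega⟩
    have hpos : 0 < rowLen m N Y i := by
      by_contra h0
      have := i.2
      by_cases h : (i : ℕ) + 1 < m
      · have := hstep ⟨i + 1, h⟩ rfl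
        omega
      · omega
    have hw := rowLen_le_width Y i
    obtain ⟨j, hj⟩ : ∃ j : Fin N, (j : ℕ) + 1 = rowLen m N Y i :=
      ⟨⟨rowLen m N Y i - 1, by omega⟩, by simp; omega⟩
    have hlow : ∀ i' : Fin m, i < i' → rowLen m N Y i' ≤ j := by
      intro i' hii
      rw [Fin.lt_def] at hii
      have hlt : (i : ℕ) + 1 < m := by omega
      have h1 := hstep ⟨i + 1, hlt⟩ rfl
      have h2 := rowLen_le_of_filter hY (i := ⟨i + 1, hlt⟩) (i' := i') (Fin.le_def.mpr hii)
      omega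
    have hA : Aop (ykappa m N) k Y \ Y = ∅ := by
      rw [Set.eq_empty_iff_forall_notMem]
      rintro ⟨a, b⟩ ⟨⟨F, ⟨hF, hFY⟩, hx⟩, hxY⟩
      have hcol : ykappa m N (a, b) = k := hFY ⟨hx, hxY⟩
      induction a using OrderDual.rec with | _ a => ?_
      induction b using OrderDual.rec with | _ b => ?_
      simp only [ykappa, OrderDual.ofDual_toDual] at hcol
      rw [mem_iff_rowLen hY] at hxY
      have hai : i < a := by
        by_contra hh
        have h3 := rowLen_le_of_filter hY (not_lt.mp hh)
        rw [Fin.lt_def] at hh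
        omega
      have h4 := hlow a hai
      rw [Fin.lt_def] at hai
      have hbN := b.2
      let b' : Fin N := ⟨b - 1, by omega⟩
      have hb' : (b' : ℕ) = b - 1 := rfl
      have hxF : ((OrderDual.toDual a, OrderDual.toDual b') : YD m N) ∈ F :=
        hF hx ⟨le_refl _, show b' ≤ b from Fin.le_def.mpr (by omega)⟩
      have hnY : ((OrderDual.toDual a, OrderDual.toDual b') : YD m N) ∉ Y := by
        rw [mem_iff_rowLen hY]
        omega
      have hcol' : ykappa m N (OrderDual.toDual a, OrderDual.toDual b') = k := hFY ⟨hxF, hnY⟩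
      simp only [ykappa, OrderDual.ofDual_toDual] at hcol'
      omega
    have hRF : IsOrderFilter (Rop (ykappa m N) k Y) := by
      intro x y hx hxy F hF
      exact hF.1 (hx F hF) hxy
    unfold Sop
    rw [hA, Set.empty_union, if_pos hRF]
    refine ⟨hRY, fun hsub => ?_⟩
    let c : YD m N := (OrderDual.toDual i, OrderDual.toDual j)
    have hcY : c ∈ Y := (mem_iff_rowLen hY i j).mpr (by omega)
    have hcR := hsub hcY
    refine (hcR (Y \ {c}) ⟨?_, ?_⟩).2 rfl
    · rintro ⟨a, b⟩ y ⟨hx, hxc⟩ hxy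
      refine ⟨hY hx hxy, ?_⟩
      rintro rfl
      apply hxc
      induction a using OrderDual.rec with | _ a => ?_
      induction b using OrderDual.rec with | _ b => ?_
      obtain ⟨h1, h2⟩ := hxy
      have h1' : i ≤ a := h1
      have h2' : j ≤ b := h2
      rw [mem_iff_rowLen hY] at hx
      have h3 := rowLen_le_of_filter hY h1'
      rw [Fin.le_def] at h2'
      have hai : a = i := by
        by_contra hne
        have := hlow a (lt_of_le_of_ne h1' (Ne.symm hne))
        omega
      have hbj : b = j := Fin.ext (by omega)
      subst hai hbj
      rfl
    · intro x hx
      have : x = c := by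
        by_contra hne
        exact hx.2 ⟨hx.1, hne⟩
      subst this
      simp only [Set.mem_preimage, Set.mem_singleton_iff, ykappa, c, OrderDual.ofDual_toDual]
      omega
  · intro hS
    unfold Sop at hS
    split_ifs at hS with hfil
    · obtain ⟨hsub, hns⟩ := hS
      obtain ⟨⟨a, b⟩, hxY, hxn⟩ := Set.not_subset.mp hns
      have hxR : (a, b) ∉ Rop (ykappa m N) k Y := fun h => hxn (Or.inr h)
      simp only [Rop, Set.mem_sInter, not_forall] at hxR
      obtain ⟨F, ⟨hF, hFY⟩, hxF⟩ := hxR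
      induction a using OrderDual.rec with | _ i => ?_
      induction b using OrderDual.rec with | _ j => ?_
      have hall : ∀ i' j', i ≤ i' → j ≤ j' →
          ((OrderDual.toDual i', OrderDual.toDual j') : YD m N) ∈ Y → (j' : ℤ) - i' + m = k := by
        intro i' j' h1 h2 h3
        have : ykappa m N (OrderDual.toDual i', OrderDual.toDual j') = k :=
          hFY ⟨h3, fun h => hxF (hF h ⟨h1, h2⟩)⟩
        simpa only [ykappa, OrderDual.ofDual_toDual] using this
      have hc := hall i j le_rfl le_rfl hxY
      rw [mem_iff_rowLen hY] at hxY
      have hlen : rowLen m N Y i = j + 1 := by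
        by_contra hne
        have hw := rowLen_le_width Y i
        have := hall i ⟨j + 1, by omega⟩ le_rfl (Fin.le_def.mpr (by simp))
          ((mem_iff_rowLen hY _ _).mpr (by simp only []; omega))
        push_cast at this
        omega
      refine ⟨?_, i, by omega⟩
      rintro ⟨i', hi'⟩
      rcases lt_trichotomy i i' with h | h | h
      · rw [Fin.lt_def] at h
        have := hall i' j (Fin.le_def.mpr h.le) le_rfl ((mem_iff_rowLen hY _ _).mpr (by omega))
        omega
      · subst h
        omega
      · have h5 := rowLen_le_of_filter hY h.le
        rw [Fin.lt_def] at h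
        omega
    · exact absurd hS (ssubset_irrefl _)

/-- For an order filter `Y` of `Y_{m,n−m+1}` and `k ∈ {1,…,n}`:
`k ∉ 𝓘(Y)` and `k+1 ∈ 𝓘(Y)` if and only if `S_k(Y) ⊊ Y`. -/
theorem ISet_iff_Sop_lt (n m : ℕ) (hm : 1 ≤ m) (hmn : 2 * m ≤ n + 1)
    (Y : Set (YD m (n - m + 1))) (hY : IsOrderFilter Y)
    (k : ℤ) (hk1 : 1 ≤ k) (hkn : k ≤ n) :
    (k ∉ ISet m (n - m + 1) Y ∧ k + 1 ∈ ISet m (n - m + 1) Y) ↔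
      Sop (ykappa m (n - m + 1)) k Y ⊂ Y := by
  exact ISet_iff_aux m (n - m + 1) Y hY k hk1
end
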